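/- arXiv:1508.04439 — 6 statements merged into one kernel-verified Lean document; each statement's English description precedes it below -/
import Mathlib

section
/- Let p and q be polynomials with real coefficients of degrees n and m respectively, with n > m, and let h(z) = p(z) + conj(q(z)) for z ∈ ℂ. Then the set of solutions z of h(z) = 0 satisfying Re(z) ≠ 0 and Im(z) ≠ 0 is finite and has at most n² − n elements. -/
open Polynomial

/-!
Write `w = conj z`. Since the coefficients are real, a zero of `h` off the real axis satisfies
`p(z) + q(w) = 0` and, by conjugating and subtracting, also
`((p - q)(z) - (p - q)(w)) / (z - w) = 0`. These two equations have degrees `n` and `n - 1`, with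
leading forms proportional to `z ^ n` and `∑ z ^ l * w ^ (n - 1 - l)`, so Bézout predicts at most
`n * (n - 1)` common solutions.

The bound is obtained by linear algebra. On a finite set `S` of such zeros, the two equations allow
every monomial `z ^ i * w ^ j`, as a function on `S`, to be rewritten as a combination of the
monomials with `i < n` and `j < n - 1` (`monomial_mem`). By Lagrange interpolation in `z` alone the
monomials span all of `S → ℂ`, whence `#S ≤ n * (n - 1)` (`card_le_of_relations`).
-/

/-- If `x ^ (N + 1)` is a combination of monomials in `x`, `w` of degree at most `N`, and the
complete homogeneous form of degree `N` in `x`, `w` is a combination of monomials of lower degree,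
then a subspace containing all `x ^ i * w ^ j` with `i ≤ N`, `j < N` contains every monomial.
The induction is on the total degree, then on the exponent of `w`. -/
lemma monomial_mem {ι : Type*} (N : ℕ) (x w : ι → ℂ) (V : Submodule ℂ (ι → ℂ))
    (hV : ∀ i j, i < N + 1 → j < N → x ^ i * w ^ j ∈ V) (b c e : ℕ → ℂ)
    (h1 : x ^ (N + 1) = ∑ k ∈ Finset.range (N + 1), (b k • x ^ k + c k • w ^ k))
    (h2 : ∑ l ∈ Finset.range (N + 1), x ^ l * w ^ (N - l) =
      ∑ k ∈ Finset.range (N + 1), e k • ∑ l ∈ Finset.range k, x ^ l * w ^ (k - 1 - l)) :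
    ∀ d j i, i + j = d → x ^ i * w ^ j ∈ V := by
  intro d
  induction d using Nat.strong_induction_on with
  | _ d ihd =>
  intro j
  induction j using Nat.strong_induction_on with
  | _ j ihj =>
  intro i hij
  by_cases hi : N + 1 ≤ i
  · obtain ⟨i, rfl⟩ := Nat.exists_eq_add_of_le hi
    have key : x ^ (N + 1 + i) * w ^ j = ∑ k ∈ Finset.range (N + 1),
        (b k • (x ^ (k + i) * w ^ j) + c k • (x ^ i * w ^ (k + j))) := by
      rw [pow_add, h1, Finset.sum_mul, Finset.sum_mul]
      refine Finset.sum_congr rfl fun k _ => ?_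
      ext s
      simp only [Pi.add_apply, Pi.mul_apply, Pi.pow_apply, Pi.smul_apply, smul_eq_mul]
      ring
    rw [key]
    refine V.sum_mem fun k hk => ?_
    have := Finset.mem_range.1 hk
    exact V.add_mem (V.smul_mem _ (ihd (k + i + j) (by omega) j _ rfl))
      (V.smul_mem _ (ihd (i + (k + j)) (by omega) _ _ rfl))
  by_cases hj : N ≤ j
  · obtain ⟨j, rfl⟩ := Nat.exists_eq_add_of_le hj
    rw [Finset.sum_range_succ'] at h2
    have key : x ^ i * w ^ (N + j) =
        ∑ k ∈ Finset.range (N + 1), e k • ∑ l ∈ Finset.range k,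
          x ^ (l + i) * w ^ (k - 1 - l + j) -
        ∑ l ∈ Finset.range N, x ^ (l + 1 + i) * w ^ (N - (l + 1) + j) := by
      have h3 := congrArg (fun f => f * (x ^ i * w ^ j)) h2
      simp only [add_mul, Finset.sum_mul, Finset.smul_sum, smul_mul_assoc] at h3 ⊢
      rw [eq_sub_iff_add_eq, add_comm]
      convert h3 using 2
      · refine Finset.sum_congr rfl fun l _ => ?_
        ring
      · simp only [Nat.sub_zero]
        ring
      · refine Finset.sum_congr rfl fun l _ => ?_
        congr 1
        ring
    rw [key]
    refine V.sub_mem (V.sum_mem fun k hk => V.smul_mem _ (V.sum_mem fun l hl => ?_))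
      (V.sum_mem fun l hl => ?_)
    · have := Finset.mem_range.1 hk
      have := Finset.mem_range.1 hl
      exact ihd (l + i + (k - 1 - l + j)) (by omega) _ _ rfl
    · have := Finset.mem_range.1 hl
      exact ihj _ (by omega) _ (by omega)
  exact hV i j (by omega) (by omega)

/-- The Bézout bound: a finite set of points with distinct `x`-coordinates satisfying the two
relations of `monomial_mem` has at most `(N + 1) * N` elements. -/
lemma card_le_of_relations {ι : Type*} [Fintype ι] (N : ℕ) (x w : ι → ℂ)
    (hx : Function.Injective x) (b c e : ℕ → ℂ)
    (h1 : x ^ (N + 1) = ∑ k ∈ Finset.range (N + 1), (b k • x ^ k + c k • w ^ k))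
    (h2 : ∑ l ∈ Finset.range (N + 1), x ^ l * w ^ (N - l) =
      ∑ k ∈ Finset.range (N + 1), e k • ∑ l ∈ Finset.range k, x ^ l * w ^ (k - 1 - l)) :
    Fintype.card ι ≤ (N + 1) * N := by
  classical
  let g : Fin (N + 1) × Fin N → (ι → ℂ) := fun ij => x ^ (ij.1 : ℕ) * w ^ (ij.2 : ℕ)
  have hmem := monomial_mem N x w (Submodule.span ℂ (Set.range g))
    (fun i j hi hj => Submodule.subset_span ⟨(⟨i, hi⟩, ⟨j, hj⟩), rfl⟩) b c e h1 h2
  have htop : Submodule.span ℂ (Set.range g) = ⊤ := by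
    refine eq_top_iff.2 fun f _ => ?_
    have hf : f = ∑ k ∈ Finset.range ((Lagrange.interpolate Finset.univ x f).natDegree + 1),
        (Lagrange.interpolate Finset.univ x f).coeff k • (x ^ k * w ^ 0) := by
      ext s
      have := Lagrange.eval_interpolate_at_node f (hx.injOn (s := ↑(Finset.univ : Finset ι)))
        (Finset.mem_univ s)
      rw [eval_eq_sum_range] at this
      rw [← this]
      simp
    rw [hf]
    exact Submodule.sum_mem _ fun k _ => Submodule.smul_mem _ _ (hmem _ 0 k rfl)
  have hcard := finrank_range_le_card (R := ℂ) g
  rw [Set.finrank, htop, finrank_top, Module.finrank_fintype_fun_eq_card] at hcard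
  simpa using hcard

/-- Theorem 1: a harmonic polynomial `h(z) = p(z) + conj (q(z))` with real
coefficients, `deg p = n > deg q = m`, has at most `n² - n` zeros off the
coordinate axes. -/
theorem harmonic_real_coeff_zeros_off_axes
    (n m : ℕ) (p q : Polynomial ℂ)
    (hpreal : ∀ k, (p.coeff k).im = 0) (hqreal : ∀ k, (q.coeff k).im = 0)
    (hp : p.natDegree = n) (hq : q.natDegree = m) (hnm : m < n) :
    {z : ℂ | p.eval z + (starRingEnd ℂ) (q.eval z) = 0 ∧ z.re ≠ 0 ∧ z.im ≠ 0}.Finite ∧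
    {z : ℂ | p.eval z + (starRingEnd ℂ) (q.eval z) = 0 ∧ z.re ≠ 0 ∧ z.im ≠ 0}.ncard
      ≤ n ^ 2 - n := by
  set T := {z : ℂ | p.eval z + (starRingEnd ℂ) (q.eval z) = 0 ∧ z.re ≠ 0 ∧ z.im ≠ 0} with hT
  obtain ⟨N, rfl⟩ : ∃ N, n = N + 1 := ⟨n - 1, by omega⟩
  have hN : (N + 1) ^ 2 - (N + 1) = (N + 1) * N := by
    rw [Nat.sub_eq_iff_eq_add (by nlinarith)]
    ring
  rw [hN]
  have ha : p.coeff (N + 1) ≠ 0 := by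
    have : p ≠ 0 := by
      rintro rfl
      simp at hp
    rw [← hp]
    exact leadingCoeff_ne_zero.2 this
  set a := p.coeff (N + 1) with ha_def
  have hpc : ∀ k, (starRingEnd ℂ) (p.coeff k) = p.coeff k := fun k =>
    Complex.conj_eq_iff_im.2 (hpreal k)
  have hqc : ∀ k, (starRingEnd ℂ) (q.coeff k) = q.coeff k := fun k =>
    Complex.conj_eq_iff_im.2 (hqreal k)
  -- On a zero and its conjugate, `p(z) + q(w) = 0` and `p(w) + q(z) = 0` in expanded form.
  have E1 : ∀ z ∈ T, ∑ k ∈ Finset.range (N + 1), p.coeff k * z ^ k + a * z ^ (N + 1) +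
      ∑ k ∈ Finset.range (N + 1), q.coeff k * (starRingEnd ℂ) z ^ k = 0 := by
    intro z hz
    have h := hz.1
    rw [eval_eq_sum_range, hp, Finset.sum_range_succ,
      eval_eq_sum_range' (n := N + 1) (by omega) z, map_sum] at h
    simpa only [map_mul, map_pow, hqc] using h
  have E2 : ∀ z ∈ T, ∑ k ∈ Finset.range (N + 1), p.coeff k * (starRingEnd ℂ) z ^ k +
      a * (starRingEnd ℂ) z ^ (N + 1) +
      ∑ k ∈ Finset.range (N + 1), q.coeff k * z ^ k = 0 := by
    intro z hz
    have h := congrArg (starRingEnd ℂ) (E1 z hz)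
    simpa only [map_add, map_sum, map_mul, map_pow, hqc, hpc, ha_def, Complex.conj_conj,
      map_zero] using h
  have hS : ∀ S : Finset ℂ, (S : Set ℂ) ⊆ T → S.card ≤ (N + 1) * N := by
    intro S hST
    rw [← Fintype.card_coe]
    refine card_le_of_relations N (fun s : S => (s : ℂ)) (fun s => (starRingEnd ℂ) (s : ℂ))
      Subtype.val_injective (fun k => -a⁻¹ * p.coeff k) (fun k => -a⁻¹ * q.coeff k)
      (fun k => -a⁻¹ * (p.coeff k - q.coeff k)) ?_ ?_
    · ext ⟨z, hz⟩
      have h := E1 z (hST hz)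
      simp only [Pi.pow_apply, Finset.sum_apply, Pi.add_apply, Pi.smul_apply, smul_eq_mul,
        mul_assoc, ← mul_add, ← Finset.mul_sum]
      rw [Finset.sum_add_distrib]
      field_simp
      linear_combination h
    · ext ⟨z, hz⟩
      have h1 := E1 z (hST hz)
      have h2 := E2 z (hST hz)
      have hne : z - (starRingEnd ℂ) z ≠ 0 := by
        intro h0
        exact (hST hz).2.2 (Complex.conj_eq_iff_im.1 (sub_eq_zero.1 h0).symm)
      simp only [Pi.pow_apply, Finset.sum_apply, Pi.mul_apply, Pi.smul_apply, smul_eq_mul]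
      -- Multiplying by `z - w` telescopes all the homogeneous forms.
      refine mul_right_cancel₀ hne ?_
      have hg := geom_sum₂_mul z ((starRingEnd ℂ) z) (N + 1)
      rw [Nat.add_sub_cancel] at hg
      rw [hg, Finset.sum_mul]
      simp only [mul_assoc, geom_sum₂_mul]
      rw [← Finset.mul_sum]
      have hsum : ∑ k ∈ Finset.range (N + 1),
          (p.coeff k - q.coeff k) * (z ^ k - (starRingEnd ℂ) z ^ k) =
          ∑ k ∈ Finset.range (N + 1), p.coeff k * z ^ k -
          ∑ k ∈ Finset.range (N + 1), p.coeff k * (starRingEnd ℂ) z ^ k -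
          ∑ k ∈ Finset.range (N + 1), q.coeff k * z ^ k +
          ∑ k ∈ Finset.range (N + 1), q.coeff k * (starRingEnd ℂ) z ^ k := by
        simp only [← Finset.sum_sub_distrib, ← Finset.sum_add_distrib]
        refine Finset.sum_congr rfl fun k _ => ?_
        ring
      rw [hsum]
      field_simp
      linear_combination h1 - h2
  have hfin : T.Finite := by
    by_contra hinf
    obtain ⟨S, hST, hcard⟩ := Set.Infinite.exists_subset_card_eq hinf ((N + 1) * N + 1)
    have := hS S hST
    omega
  refine ⟨hfin, ?_⟩
  rw [Set.ncard_eq_toFinset_card T hfin]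
  exact hS _ (by simp)
end

section
/- For all integers n and m with 1 ≤ m < n, there exist polynomials p, q with complex coefficients, of degrees n and m respectively, such that the zero set {z ∈ ℂ : p(z) + conj(q(z)) = 0} has at least 3n − 2 elements. -/
open Polynomial

/-!
Let `T_j` denote the Chebyshev polynomials. For small `δ, ε > 0` take `s = X + δ T_m`,
`p = s + i ε T_n` and `q = -s`. Since `s` has real coefficients,
`p(z) + conj (q(z)) = i (2 Im s(z) + ε T_n(z))`, so the zeros are the points at which `T_n(z)`
is real and equal to `-2 Im s(z) / ε`.

Write `z = cos (a + i v)` with `0 < a < π`, which is injective in `(a, v)`. Then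
`T_n(z) = cos (n a) cosh (n v) - i sin (n a) sinh (n v)`, and zeros appear in two ways.

* If `v = 0`, then `z` and `s(z)` are real, so the `n` roots of `T_n` are zeros.
* If `a = k π / n` with `0 < k < n`, then `T_n(z) = (-1)^k cosh (n v)` is real. With
  `v = (-1)^k u` the equation becomes
  `2 (sin a sinh u + δ sin (m a) sinh (m u)) = ε cosh (n u)`. The left side is smaller at `u = 0`,
  larger at `u = 1` when `δ` and `ε` are small, and smaller again for large `u` because `m < n`
  (`exists_two_crossings`), which gives two solutions for each of the `n - 1` values of `k`.

The total is `n + 2 (n - 1) = 3 n - 2`.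
-/

/-- The point `cos (a + i v)`; for fixed `a` it runs through a branch of a hyperbola with foci
`±1`. -/
noncomputable def hypPoint (a v : ℝ) : ℂ := Complex.cos (a + v * Complex.I)

theorem hypPoint_injective {a b v w : ℝ} (ha : 0 < a) (ha' : a < Real.pi) (hb : 0 < b)
    (hb' : b < Real.pi) (h : hypPoint a v = hypPoint b w) : a = b ∧ v = w := by
  obtain ⟨k, hk⟩ := Complex.cos_eq_cos_iff.mp h
  rcases hk with hk | hk
  · have hre := congrArg Complex.re hk
    have him := congrArg Complex.im hk
    simp at hre him
    have hk0 : k = 0 := by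
      have h1 : (k : ℝ) < 1 := by nlinarith [Real.pi_pos]
      have h2 : (-1 : ℝ) < k := by nlinarith [Real.pi_pos]
      have h1' : k < 1 := by exact_mod_cast h1
      have h2' : -1 < k := by exact_mod_cast h2
      omega
    subst hk0
    simp at hre
    exact ⟨hre.symm, him.symm⟩
  · exfalso
    have hre := congrArg Complex.re hk
    simp at hre
    have h1 : (k : ℝ) < 1 := by nlinarith [Real.pi_pos]
    have h2 : (0 : ℝ) < k := by nlinarith [Real.pi_pos]
    have h1' : k < 1 := by exact_mod_cast h1
    have h2' : 0 < k := by exact_mod_cast h2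
    omega

theorem eval_T_hypPoint (j : ℕ) (a v : ℝ) :
    (Chebyshev.T ℂ j).eval (hypPoint a v) =
      ((Real.cos (j * a) * Real.cosh (j * v) : ℝ) : ℂ)
        - ((Real.sin (j * a) * Real.sinh (j * v) : ℝ) : ℂ) * Complex.I := by
  rw [hypPoint, Chebyshev.T_complex_cos]
  have : ((j : ℤ) : ℂ) * (a + v * Complex.I) =
      ((j * a : ℝ) : ℂ) + ((j * v : ℝ) : ℂ) * Complex.I := by
    push_cast
    ring
  rw [this, Complex.cos_add_mul_I]
  push_cast
  ring

theorem harmonic_eval_eq_zero (n m : ℕ) (δ ε a v : ℝ)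
    (hreal : Real.sin (n * a) * Real.sinh (n * v) = 0)
    (heq : 2 * (Real.sin a * Real.sinh v + δ * (Real.sin (m * a) * Real.sinh (m * v))) =
      ε * (Real.cos (n * a) * Real.cosh (n * v))) :
    (X + C (δ : ℂ) * Chebyshev.T ℂ m + C (ε * Complex.I) * Chebyshev.T ℂ n).eval (hypPoint a v) +
      (starRingEnd ℂ) ((-(X + C (δ : ℂ) * Chebyshev.T ℂ m)).eval (hypPoint a v)) = 0 := by
  have hX : hypPoint a v = ((Real.cos a * Real.cosh v : ℝ) : ℂ)
      - ((Real.sin a * Real.sinh v : ℝ) : ℂ) * Complex.I := by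
    have := eval_T_hypPoint 1 a v
    simpa using this
  simp only [eval_add, eval_neg, eval_mul, eval_C, eval_X, eval_T_hypPoint, hreal]
  rw [hX]
  generalize Real.cos (n * a) * Real.cosh (n * v) = A at *
  generalize Real.sin a * Real.sinh v = B at *
  generalize Real.sin (m * a) * Real.sinh (m * v) = D at *
  have heq' : (2 * (B + δ * D) : ℂ) = ε * A := by exact_mod_cast heq
  simp only [map_add, map_neg, map_sub, map_mul, Complex.conj_ofReal, Complex.conj_I,
    Complex.ofReal_zero]
  linear_combination (-Complex.I) * heq'

/-- The function `u ↦ 2 (A sinh u + δ B sinh (m u)) - ε cosh (n u)` is negative at `0`, positive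
at `1` and negative for large `u`, so it vanishes on both sides of `1`. -/
theorem exists_two_crossings {n m : ℕ} (hm : 1 ≤ m) (hmn : m < n) {δ ε A B : ℝ} (hδ : 0 < δ)
    (hε : 0 < ε) (hA : A ≤ 1) (hB : B ≤ 1)
    (h1 : ε * Real.cosh n < 2 * (A * Real.sinh 1 + δ * (B * Real.sinh m))) :
    ∃ u w : ℝ, 0 < u ∧ u < 1 ∧ 1 < w ∧
      2 * (A * Real.sinh u + δ * (B * Real.sinh (m * u))) = ε * Real.cosh (n * u) ∧
      2 * (A * Real.sinh w + δ * (B * Real.sinh (m * w))) = ε * Real.cosh (n * w) := by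
  set F : ℝ → ℝ := fun u =>
    2 * (A * Real.sinh u + δ * (B * Real.sinh (m * u))) - ε * Real.cosh (n * u) with hF
  have hc : Continuous F := by
    have := Real.continuous_sinh
    have := Real.continuous_cosh
    fun_prop
  have hF0 : F 0 < 0 := by simp [hF, hε]
  have hF1 : 0 < F 1 := by simpa [hF] using h1
  obtain ⟨t, ht, htF⟩ : ∃ t : ℝ, 1 < t ∧ F t < 0 := by
    obtain ⟨t, ht1, ht⟩ := ((Filter.eventually_gt_atTop (1 : ℝ)).and
      (Real.tendsto_exp_atTop.eventually_gt_atTop (2 * (1 + δ) / ε))).exists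
    refine ⟨t, ht1, ?_⟩
    have ht0 : 0 < t := by linarith
    have hmR : (1 : ℝ) ≤ m := by exact_mod_cast hm
    have hmnR : (m : ℝ) + 1 ≤ n := by exact_mod_cast hmn
    have s0 : 0 ≤ Real.sinh t := Real.sinh_nonneg_iff.mpr ht0.le
    have s1 : 0 ≤ Real.sinh (m * t) := Real.sinh_nonneg_iff.mpr (by positivity)
    have e1 : Real.sinh t ≤ Real.sinh (m * t) := Real.sinh_le_sinh.mpr (by nlinarith)
    have e2 : Real.sinh (m * t) ≤ Real.exp (m * t) / 2 := by
      rw [Real.sinh_eq]; linarith [Real.exp_pos (-(m * t))]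
    have e3 : Real.exp (n * t) / 2 ≤ Real.cosh (n * t) := by
      rw [Real.cosh_eq]; linarith [Real.exp_pos (-(n * t))]
    have e4 : Real.exp (m * t) * Real.exp t ≤ Real.exp (n * t) := by
      rw [← Real.exp_add]; exact Real.exp_le_exp.mpr (by nlinarith)
    have e5 : 2 * (1 + δ) < ε * Real.exp t := by
      rw [div_lt_iff₀ hε] at ht; linarith
    have e6 : 2 * (1 + δ) * Real.exp (m * t) < ε * Real.exp t * Real.exp (m * t) :=
      mul_lt_mul_of_pos_right e5 (Real.exp_pos _)
    have f1 : A * Real.sinh t ≤ Real.exp (m * t) / 2 := by nlinarith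
    have f2 : δ * (B * Real.sinh (m * t)) ≤ δ * (Real.exp (m * t) / 2) :=
      mul_le_mul_of_nonneg_left (by nlinarith) hδ.le
    have f3 : ε * (Real.exp (m * t) * Real.exp t / 2) ≤ ε * Real.cosh (n * t) :=
      mul_le_mul_of_nonneg_left (by linarith) hε.le
    simp only [hF]
    nlinarith
  obtain ⟨u, hu, huF⟩ := intermediate_value_Ioo zero_le_one hc.continuousOn
    (show (0 : ℝ) ∈ Set.Ioo (F 0) (F 1) from ⟨hF0, hF1⟩)
  obtain ⟨w, hw, hwF⟩ := intermediate_value_Ioo' ht.le hc.continuousOn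
    (show (0 : ℝ) ∈ Set.Ioo (F t) (F 1) from ⟨htF, hF1⟩)
  exact ⟨u, w, hu.1, hu.2, hw.1, sub_eq_zero.mp huF, sub_eq_zero.mp hwF⟩

theorem natDegree_X_add_C_mul_T {m : ℕ} (hm : 1 ≤ m) {δ : ℝ} (hδ : 0 < δ) :
    (X + C (δ : ℂ) * Chebyshev.T ℂ m).natDegree = m := by
  have hδ' : (δ : ℂ) ≠ 0 := by exact_mod_cast hδ.ne'
  rcases hm.eq_or_lt with rfl | hm
  · have h1 : (X + C (δ : ℂ) * Chebyshev.T ℂ ((1 : ℕ) : ℤ)) = C ((1 + δ : ℝ) : ℂ) * X := by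
      simp; ring
    rw [h1, natDegree_C_mul_X _ (by exact_mod_cast (by positivity : (1 + δ : ℝ) ≠ 0))]
  · rw [natDegree_add_eq_right_of_natDegree_lt] <;>
      simp [natDegree_C_mul hδ', Chebyshev.natDegree_T, hm]

/-- Theorem 2: for all `n > m ≥ 1` there is a harmonic polynomial
`h = p + conj ∘ q` with `deg p = n`, `deg q = m`, having at least `3n - 2` zeros. -/
theorem exists_harmonic_with_3n_sub_2_zeros
    (n m : ℕ) (hm : 1 ≤ m) (hmn : m < n) :
    ∃ p q : Polynomial ℂ, p.natDegree = n ∧ q.natDegree = m ∧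
      ∃ S : Finset ℂ, 3 * n - 2 ≤ S.card ∧
        ∀ z ∈ S, p.eval z + (starRingEnd ℂ) (q.eval z) = 0 := by
  have hn0 : (0 : ℝ) < n := by exact_mod_cast (by omega : 0 < n)
  have hπ := Real.pi_pos
  -- `a k` gives the interior extrema of `T_n` and `b k` its roots, both as angles.
  set a : Fin (n - 1) → ℝ := fun k => ((k : ℕ) + 1 : ℝ) * Real.pi / n with ha
  set b : Fin n → ℝ := fun k => (2 * (k : ℕ) + 1 : ℝ) * Real.pi / (2 * n) with hb
  have ha0 : ∀ k, 0 < a k := fun k => by simp only [ha]; positivity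
  have haπ : ∀ k, a k < Real.pi := fun k => by
    have hk : ((k : ℕ) + 1 : ℝ) < n := by exact_mod_cast (by omega : (k : ℕ) + 1 < n)
    simp only [ha]
    rw [div_lt_iff₀ hn0]
    nlinarith
  have hb0 : ∀ k, 0 < b k := fun k => by simp only [hb]; positivity
  have hbπ : ∀ k, b k < Real.pi := fun k => by
    have hk : ((k : ℕ) + 1 : ℝ) ≤ n := by exact_mod_cast (by omega : (k : ℕ) + 1 ≤ n)
    simp only [hb]
    rw [div_lt_iff₀ (by positivity)]
    nlinarith
  have ha_inj : Function.Injective a := fun k l h => by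
    simp only [ha] at h
    field_simp at h
    exact Fin.ext (by exact_mod_cast add_right_cancel h)
  have hb_inj : Function.Injective b := fun k l h => by
    simp only [hb] at h
    field_simp at h
    have h' : ((k : ℕ) : ℝ) = (l : ℕ) := by linarith
    exact Fin.ext (by exact_mod_cast h')
  have hna : ∀ k, (n : ℝ) * a k = (((k : ℕ) + 1 : ℕ) : ℝ) * Real.pi := fun k => by
    simp only [ha]; push_cast; field_simp
  have hsin : ∀ k, Real.sin (n * a k) = 0 := fun k => by
    rw [hna, Real.sin_nat_mul_pi]
  have hcos : ∀ k, Real.cos (n * a k) = (-1) ^ ((k : ℕ) + 1) := fun k => by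
    rw [hna, Real.cos_nat_mul_pi]
  have hcosb : ∀ k, Real.cos (n * b k) = 0 := fun k => by
    rw [Real.cos_eq_zero_iff]
    exact ⟨(k : ℕ), by simp only [hb]; push_cast; field_simp⟩
  obtain ⟨σ, hσ, hσa⟩ : ∃ σ : ℝ, 0 < σ ∧ ∀ k, σ ≤ Real.sin (a k) := by
    obtain ⟨k, -, hk⟩ := Finset.exists_min_image Finset.univ (fun k => Real.sin (a k))
      ⟨⟨0, by omega⟩, Finset.mem_univ _⟩
    exact ⟨_, Real.sin_pos_of_pos_of_lt_pi (ha0 k) (haπ k), fun l => hk l (Finset.mem_univ _)⟩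
  have hsm : 0 < Real.sinh m := Real.sinh_pos_iff.mpr (by exact_mod_cast hm)
  have hcn : 0 < Real.cosh n := Real.cosh_pos _
  obtain ⟨δ, hδ, hδm⟩ : ∃ δ : ℝ, 0 < δ ∧ δ * Real.sinh m = σ / 2 :=
    ⟨σ / 2 / Real.sinh m, by positivity, by field_simp⟩
  obtain ⟨ε, hε, hεn⟩ : ∃ ε : ℝ, 0 < ε ∧ ε * Real.cosh n = σ / 2 :=
    ⟨σ / 2 / Real.cosh n, by positivity, by field_simp⟩
  have hcross : ∀ k, _ := fun k => exists_two_crossings hm hmn hδ hε (Real.sin_le_one (a k))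
    (Real.sin_le_one (m * a k)) (by
      have h1 : (1 : ℝ) ≤ Real.sinh 1 := Real.self_le_sinh_iff.mpr zero_le_one
      have h2 : -(δ * Real.sinh m) ≤ δ * (Real.sin (m * a k) * Real.sinh m) := by
        nlinarith [mul_pos hδ hsm, Real.neg_one_le_sin (m * a k)]
      nlinarith [hσa k])
  choose u w hu0 hu1 hw1 hu hw using hcross
  set sg : Fin (n - 1) → ℝ := fun k => (-1) ^ ((k : ℕ) + 1) with hsg
  have hsg' : ∀ k, sg k = 1 ∨ sg k = -1 := fun k => neg_one_pow_eq_or ℝ _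
  have habs : ∀ k x, |sg k * x| = |x| := fun k x => by
    rcases hsg' k with h | h <;> simp [h]
  -- On the curve `a = a k` the sign of `T_n` is `sg k`, so the zeros lie at `v = sg k * x`, `x > 0`.
  have hsolve : ∀ k x, 2 * (Real.sin (a k) * Real.sinh x +
      δ * (Real.sin (m * a k) * Real.sinh (m * x))) = ε * Real.cosh (n * x) →
      (X + C (δ : ℂ) * Chebyshev.T ℂ m + C (ε * Complex.I) * Chebyshev.T ℂ n).eval
        (hypPoint (a k) (sg k * x)) + (starRingEnd ℂ)
        ((-(X + C (δ : ℂ) * Chebyshev.T ℂ m)).eval (hypPoint (a k) (sg k * x))) = 0 := by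
    intro k x hx
    refine harmonic_eval_eq_zero n m δ ε _ _ (by rw [hsin, zero_mul]) ?_
    rw [hcos, show ((-1 : ℝ)) ^ ((k : ℕ) + 1) = sg k from rfl]
    rcases hsg' k with h | h
    · simpa [h] using hx
    · simp only [h, neg_mul, one_mul, mul_neg, Real.sinh_neg, Real.cosh_neg]
      linarith
  -- The angle and height of each zero: the roots of `T_n`, then the crossings
  -- below and above `1`.
  set f : Fin n ⊕ (Fin (n - 1) ⊕ Fin (n - 1)) → ℝ × ℝ :=
    Sum.elim (fun k => (b k, 0))
      (Sum.elim (fun k => (a k, sg k * u k)) (fun k => (a k, sg k * w k))) with hf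
  have hf_range : ∀ i, 0 < (f i).1 ∧ (f i).1 < Real.pi := by
    rintro (k | k | k)
    exacts [⟨hb0 k, hbπ k⟩, ⟨ha0 k, haπ k⟩, ⟨ha0 k, haπ k⟩]
  have hua : ∀ k, |sg k * u k| = u k := fun k => by rw [habs, abs_of_pos (hu0 k)]
  have hwa : ∀ k, |sg k * w k| = w k := fun k => by
    rw [habs, abs_of_pos (by linarith [hw1 k])]
  -- The three families are separated by `|v| = 0`, `0 < |v| < 1` and `1 < |v|`.
  have hf_inj : Function.Injective f := by
    have key : ∀ i j, f i = f j → (f i).1 = (f j).1 ∧ |(f i).2| = |(f j).2| :=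
      fun i j h => by rw [h]; exact ⟨rfl, rfl⟩
    rintro (k | k | k) (l | l | l) h <;> obtain ⟨h1, h2⟩ := key _ _ h <;>
      simp only [hf, Sum.elim_inl, Sum.elim_inr, hua, hwa, abs_zero] at h1 h2
    · rw [hb_inj h1]
    · linarith [hu0 l]
    · linarith [hw1 l]
    · linarith [hu0 k]
    · rw [ha_inj h1]
    · linarith [hu1 k, hw1 l]
    · linarith [hw1 k]
    · linarith [hu1 l, hw1 k]
    · rw [ha_inj h1]
  refine ⟨X + C (δ : ℂ) * Chebyshev.T ℂ m + C (ε * Complex.I) * Chebyshev.T ℂ n,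
    -(X + C (δ : ℂ) * Chebyshev.T ℂ m), ?_, ?_,
    Finset.univ.image (fun i => hypPoint (f i).1 (f i).2), ?_, ?_⟩
  · have hε' : (ε : ℂ) * Complex.I ≠ 0 :=
      mul_ne_zero (by exact_mod_cast hε.ne') Complex.I_ne_zero
    rw [natDegree_add_eq_right_of_natDegree_lt] <;>
      simp only [natDegree_C_mul hε', Chebyshev.natDegree_T, natDegree_X_add_C_mul_T hm hδ,
        Int.natAbs_natCast, hmn]
  · rw [natDegree_neg, natDegree_X_add_C_mul_T hm hδ]
  · rw [Finset.card_image_of_injective]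
    · simp; omega
    · intro i j h
      obtain ⟨h1, h2⟩ := hypPoint_injective (hf_range i).1 (hf_range i).2 (hf_range j).1
        (hf_range j).2 h
      exact hf_inj (Prod.ext h1 h2)
  · intro z hz
    obtain ⟨i, -, rfl⟩ := Finset.mem_image.mp hz
    rcases i with k | k | k
    · exact harmonic_eval_eq_zero n m δ ε (b k) 0 (by simp) (by simp [hcosb])
    · exact hsolve k _ (hu k)
    · exact hsolve k _ (hw k)
end

section
/- For all integers n and m with 1 ≤ m < n, there exist polynomials p, q with complex coefficients, of degrees n and m respectively, such that the zero set {z ∈ ℂ : p(z) + conj(q(z)) = 0} has at least m² + m + n elements. -/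
open Polynomial

/-!
The harmonic polynomial is a small perturbation, by a term `t ^ (n - m) * z ^ n` with `t > 0`, of
`h₀ z = (z ^ m - (z - c) ^ m) / 2 + conj ((z ^ m + (z - c) ^ m) / 2)`, which equals
`Re (z ^ m) - i * Im ((z - c) ^ m)`.

The zeros of `h₀` are the intersections of the `m` lines `Re (z ^ m) = 0` through `0` with the `m`
lines `Im ((z - c) ^ m) = 0` through `c`. If `c ^ (2 * m) = I`, no two of these lines are parallel
and none is the line through `0` and `c`, so there are `m ^ 2` intersections, all of them
nondegenerate zeros (`nondeg_pencils`).

Substituting `z = w / t` and multiplying by `t ^ m` turns the perturbed polynomial into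
`w ^ n + (w ^ m - (w - t * c) ^ m) / 2 + conj ((w ^ m + (w - t * c) ^ m) / 2)`, which at `t = 0` is
`w ^ n + conj (w ^ m)`. That function has `n + m` nondegenerate zeros on the unit circle, the
solutions of `w ^ (m + n) = -1` (`nondeg_infinity`).

By the inverse function theorem nondegenerate zeros persist for small `t`
(`eventually_exists_finset`). The first family stays bounded, and the second, in the coordinate
`z = w / t`, has modulus greater than `1 / (2 * t)`; so for small `t` the two are disjoint and
`m ^ 2 + m + n` distinct zeros result.
-/

open scoped ComplexConjugate Topology

theorem exists_finset_pow_eq {k : ℕ} (hk : 0 < k) {a : ℂ} (ha : a ≠ 0) :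
    ∃ S : Finset ℂ, S.card = k ∧ ∀ z ∈ S, z ^ k = a := by
  have hζ := Complex.isPrimitiveRoot_exp k hk.ne'
  refine ⟨(nthRoots k a).toFinset, ?_, ?_⟩
  · rw [Multiset.toFinset_card_of_nodup (hζ.nthRoots_nodup ha), hζ.card_nthRoots, if_pos]
    exact IsAlgClosed.exists_pow_nat_eq a hk
  · intro z hz
    rwa [Multiset.mem_toFinset, mem_nthRoots hk] at hz

/-- `z` is a nondegenerate zero of `f`: one can write `f = P + conj Q` with `P` and `Q` complex
differentiable at `z`, and the Jacobian `‖P'‖ ^ 2 - ‖Q'‖ ^ 2` does not vanish at `z`. -/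
def NondegZero (f : ℂ → ℂ) (z : ℂ) : Prop :=
  f z = 0 ∧ ∃ P Q : ℂ → ℂ, ∃ a b : ℂ, (∀ x, f x = P x + conj (Q x)) ∧
    HasDerivAt P a z ∧ HasDerivAt Q b z ∧ ‖a‖ ≠ ‖b‖

theorem NondegZero.exists_hasFDerivAt {f : ℂ → ℂ} {z : ℂ} (h : NondegZero f z) :
    ∃ L : ℂ →L[ℝ] ℂ, HasFDerivAt f L z ∧ Function.Surjective L := by
  obtain ⟨-, P, Q, a, b, hf, hP, hQ, hab⟩ := h
  have hP' := hP.hasFDerivAt.restrictScalars ℝ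
  have hQ' := hQ.hasFDerivAt.restrictScalars ℝ
  have hC := (Complex.conjCLE.toContinuousLinearMap.hasFDerivAt (x := Q z)).comp z hQ'
  have hs := hP'.add hC
  refine ⟨_, hs.congr_of_eventuallyEq (Filter.Eventually.of_forall hf), ?_⟩
  refine LinearMap.surjective_of_injective (f := ContinuousLinearMap.toLinearMap _) ?_
  rw [injective_iff_map_eq_zero]
  intro v hv
  have hv' : v * a + conj (v * b) = 0 := by simpa using hv
  by_contra hv0
  apply hab
  have h1 : ‖v * a‖ = ‖v * b‖ := by
    rw [eq_neg_of_add_eq_zero_left hv', norm_neg, RCLike.norm_conj]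
  rw [norm_mul, norm_mul] at h1
  exact mul_left_cancel₀ (norm_ne_zero_iff.mpr hv0) h1

/-- A nondegenerate zero survives small changes of the parameter: `(t, x) ↦ (t, F (t, x))` has
surjective derivative at `(0, z)`, hence is open there and attains `(t, 0)` for small `t`. -/
theorem NondegZero.eventually_exists {F : ℝ × ℂ → ℂ} (hF : ContDiff ℝ 1 F) {z : ℂ}
    (hz : NondegZero (fun x => F (0, x)) z) {U : Set ℂ} (hU : U ∈ 𝓝 z) :
    ∀ᶠ t in 𝓝 (0 : ℝ), ∃ w ∈ U, F (t, w) = 0 := by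
  obtain ⟨L, hL, hsurj⟩ := hz.exists_hasFDerivAt
  have hF' := hF.contDiffAt.hasStrictFDerivAt (x := ((0 : ℝ), z)) one_ne_zero
  have hLF : ∀ v, fderiv ℝ F (0, z) (0, v) = L v := by
    have h1 := hF'.hasFDerivAt.comp z
      ((hasFDerivAt_const (0 : ℝ) z).prodMk (hasFDerivAt_id z))
    intro v
    rw [hL.unique h1]
    simp
  have hG := hasStrictFDerivAt_fst.prodMk hF'
  have hmap := hG.map_nhds_eq_of_surj (by
    rw [LinearMap.range_eq_top]
    rintro ⟨s, y⟩
    obtain ⟨v, hv⟩ := hsurj (y - fderiv ℝ F (0, z) (s, 0))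
    refine ⟨(s, v), ?_⟩
    have : ((s, v) : ℝ × ℂ) = (s, 0) + (0, v) := by simp
    refine Prod.ext rfl ?_
    change fderiv ℝ F (0, z) (s, v) = y
    rw [this, map_add, hLF, hv]
    ring)
  have hz0 : F (0, z) = 0 := hz.1
  simp only [hz0] at hmap
  have hV : (Set.univ ×ˢ U : Set (ℝ × ℂ)) ∈ 𝓝 ((0 : ℝ), z) :=
    prod_mem_nhds Filter.univ_mem hU
  have h2 := Filter.image_mem_map (m := fun p : ℝ × ℂ => (p.1, F p)) hV
  rw [hmap] at h2
  have hc : Continuous fun t : ℝ => (t, (0 : ℂ)) := by fun_prop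
  filter_upwards [hc.continuousAt.preimage_mem_nhds (x := 0) h2] with t ht
  obtain ⟨⟨s, w⟩, ⟨-, hw⟩, he⟩ := ht
  simp only [Prod.mk.injEq] at he
  obtain ⟨rfl, he⟩ := he
  exact ⟨w, hw, he⟩

/-- Finitely many nondegenerate zeros persist simultaneously, staying distinct and `δ`-close to the
original ones. -/
theorem eventually_exists_finset {F : ℝ × ℂ → ℂ} (hF : ContDiff ℝ 1 F) (S : Finset ℂ)
    (hS : ∀ z ∈ S, NondegZero (fun x => F (0, x)) z) {δ : ℝ} (hδ : 0 < δ) :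
    ∀ᶠ t in 𝓝 (0 : ℝ), ∃ T : Finset ℂ, T.card = S.card ∧
      ∀ w ∈ T, F (t, w) = 0 ∧ ∃ z ∈ S, dist w z < δ := by
  classical
  obtain ⟨U, hU, hdisj⟩ := S.finite_toSet.t2_separation
  have h := (Filter.eventually_all_finset S).2 fun z hz =>
    (hS z hz).eventually_exists hF
      (Filter.inter_mem ((hU z).2.mem_nhds (hU z).1) (Metric.ball_mem_nhds z hδ))
  filter_upwards [h] with t ht
  choose! w hw h0 using ht
  refine ⟨S.image w, Finset.card_image_of_injOn ?_, ?_⟩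
  · intro x hx y hy hxy
    by_contra hne
    refine Set.disjoint_left.1 (hdisj hx hy hne) (hw x hx).1 ?_
    rw [hxy]
    exact (hw y hy).1
  · intro v hv
    obtain ⟨z, hz, rfl⟩ := Finset.mem_image.1 hv
    exact ⟨h0 z hz, z, hz, (hw z hz).2⟩

/-- Two pencils of `m` lines meet in `m ^ 2` nondegenerate zeros. A line through `0` on which
`Re (z ^ m) = 0` has the equation `z = α * conj z` with `α ^ m = -1`, and a line through `c` on which
`Im ((z - c) ^ m) = 0` has the equation `z - c = β * conj (z - c)` with `β ^ m = 1`. -/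
theorem nondeg_pencils {m : ℕ} (hm : 1 ≤ m) {c : ℂ} (hc1 : ‖c‖ = 1)
    (hc : c ^ (2 * m) = Complex.I) :
    ∃ S : Finset ℂ, S.card = m ^ 2 ∧ ∀ z ∈ S, NondegZero
      (fun z => (z ^ m - (z - c) ^ m) / 2 + conj ((z ^ m + (z - c) ^ m) / 2)) z := by
  classical
  obtain ⟨A, hA, hA'⟩ := exists_finset_pow_eq hm (neg_ne_zero.2 (one_ne_zero (α := ℂ)))
  obtain ⟨B, hB, hB'⟩ := exists_finset_pow_eq hm (one_ne_zero (α := ℂ))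
  have hcc : c * conj c = 1 := by rw [Complex.mul_conj']; simp [hc1]
  have hunit : ∀ x : ℂ, ‖x ^ m‖ = 1 → x * conj x = 1 := by
    intro x hx
    rw [norm_pow] at hx
    rw [Complex.mul_conj', (pow_eq_one_iff_of_nonneg (norm_nonneg x) (by omega)).1 hx]
    simp
  have hc0 : c ≠ 0 := by rintro rfl; simp at hc1
  have hccj : ∀ x : ℂ, x ^ m ≠ Complex.I → c - x * conj c ≠ 0 := by
    intro x hx h0
    apply hx
    rw [← hc, pow_mul]
    congr 1
    linear_combination (-c) * h0 - x * hcc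
  have hI1 : (-1 : ℂ) ≠ Complex.I := fun h => by simpa using congrArg Complex.re h
  have hI2 : (1 : ℂ) ≠ Complex.I := fun h => by simpa using congrArg Complex.re h
  -- The intersection of the lines `z = α * conj z` and `z - c = β * conj (z - c)`.
  let Z : ℂ × ℂ → ℂ := fun x => x.1 * (c - x.2 * conj c) / (x.1 - x.2)
  have key : ∀ x ∈ A ×ˢ B, x.1 - x.2 ≠ 0 ∧ Z x ≠ 0 ∧ Z x - c ≠ 0 ∧ Z x = x.1 * conj (Z x) ∧
      Z x - c = x.2 * conj (Z x - c) := by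
    rintro ⟨α, β⟩ hx
    obtain ⟨hα, hβ⟩ := Finset.mem_product.1 hx
    have hα := hA' α hα
    have hβ := hB' β hβ
    have hα1 := hunit α (by simp [hα])
    have hβ1 := hunit β (by simp [hβ])
    have hα0 : α ≠ 0 := left_ne_zero_of_mul_eq_one hα1
    have hβ0 : β ≠ 0 := left_ne_zero_of_mul_eq_one hβ1
    have hαi : conj α = α⁻¹ := eq_inv_of_mul_eq_one_right hα1
    have hβi : conj β = β⁻¹ := eq_inv_of_mul_eq_one_right hβ1
    have hci : conj c = c⁻¹ := eq_inv_of_mul_eq_one_right hcc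
    have hne : α - β ≠ 0 := by
      intro h
      rw [sub_eq_zero.1 h, hβ] at hα
      norm_num at hα
    have hne' : β - α ≠ 0 := by rwa [← neg_ne_zero, neg_sub]
    have h1 := hccj β (by rw [hβ]; exact hI2)
    have h2 := hccj α (by rw [hα]; exact hI1)
    have hZc : Z (α, β) - c = β * (c - α * conj c) / (α - β) := by
      simp only [Z]; field_simp; ring
    have hZ : Z (α, β) = α * conj (Z (α, β)) := by
      simp only [Z, map_div₀, map_mul, map_sub, Complex.conj_conj, hαi, hβi]
      simp only [hci]
      have : α⁻¹ - β⁻¹ = (β - α) / (α * β) := by field_simp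
      rw [this]
      field_simp
      ring
    refine ⟨hne, div_ne_zero (mul_ne_zero hα0 h1) hne, ?_, hZ, ?_⟩
    · rw [hZc]
      exact div_ne_zero (mul_ne_zero hβ0 h2) hne
    · rw [hZc]
      simp only [map_div₀, map_mul, map_sub, Complex.conj_conj, hαi, hβi]
      simp only [hci]
      have : α⁻¹ - β⁻¹ = (β - α) / (α * β) := by field_simp
      rw [this]
      field_simp
      ring
  refine ⟨(A ×ˢ B).image Z, ?_, ?_⟩
  · rw [Finset.card_image_of_injOn, Finset.card_product, hA, hB, sq]
    intro x hx y hy hxy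
    obtain ⟨-, hx1, hx2, hx3, hx4⟩ := key x hx
    obtain ⟨-, -, -, hy3, hy4⟩ := key y hy
    rw [← hxy] at hy3 hy4
    refine Prod.ext ?_ ?_
    · exact mul_right_cancel₀ ((map_ne_zero (starRingEnd ℂ)).2 hx1) (hx3.symm.trans hy3)
    · exact mul_right_cancel₀ ((map_ne_zero (starRingEnd ℂ)).2 hx2) (hx4.symm.trans hy4)
  · intro z hz
    obtain ⟨x, hx, rfl⟩ := Finset.mem_image.1 hz
    obtain ⟨h0, h1, h2, h3, h4⟩ := key x hx
    obtain ⟨hα, hβ⟩ := Finset.mem_product.1 hx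
    have hα := hA' _ hα
    have hβ := hB' _ hβ
    generalize Z x = z at *
    obtain ⟨α, β⟩ := x
    simp only at h0 h3 h4 hα hβ
    obtain ⟨k, rfl⟩ : ∃ k, m = k + 1 := ⟨m - 1, by omega⟩
    have e1 : z ^ (k + 1) = -conj (z ^ (k + 1)) := by
      conv_lhs => rw [h3, mul_pow, hα]
      simp
    have e2 : (z - c) ^ (k + 1) = conj ((z - c) ^ (k + 1)) := by
      conv_lhs => rw [h4, mul_pow, hβ]
      simp
    refine ⟨?_, fun z => (z ^ (k + 1) - (z - c) ^ (k + 1)) / 2,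
      fun z => (z ^ (k + 1) + (z - c) ^ (k + 1)) / 2,
      (k + 1) * (z ^ k - (z - c) ^ k) / 2, (k + 1) * (z ^ k + (z - c) ^ k) / 2,
      fun _ => rfl, ?_, ?_, ?_⟩
    · simp only [map_div₀, map_add, Complex.conj_ofNat]
      linear_combination e1 / 2 - e2 / 2
    · have := (((hasDerivAt_id z).pow (k + 1)).sub
        (((hasDerivAt_id z).sub_const c).pow (k + 1))).div_const 2
      refine this.congr_deriv ?_
      simp only [Nat.cast_add, Nat.cast_one, Nat.add_sub_cancel, id]
      ring
    · have := (((hasDerivAt_id z).pow (k + 1)).add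
        (((hasDerivAt_id z).sub_const c).pow (k + 1))).div_const 2
      refine this.congr_deriv ?_
      simp only [Nat.cast_add, Nat.cast_one, Nat.add_sub_cancel, id]
      ring
    -- Equal norms would make `z ^ k` and `(z - c) ^ k` orthogonal in the plane; as
    -- `conj (z ^ k) = -α * z ^ k` and `conj ((z - c) ^ k) = β * (z - c) ^ k`, this forces `α = β`.
    · have hk : ((k : ℂ) + 1) ≠ 0 := Nat.cast_add_one_ne_zero k
      have f1 : conj (z ^ k) = -α * z ^ k := by
        have hz : conj z ≠ 0 := (map_ne_zero (starRingEnd ℂ)).2 h1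
        apply mul_right_cancel₀ hz
        rw [pow_succ, map_mul] at e1
        linear_combination e1 - z ^ k * h3
      have f2 : conj ((z - c) ^ k) = β * (z - c) ^ k := by
        have hz : conj (z - c) ≠ 0 := (map_ne_zero (starRingEnd ℂ)).2 h2
        apply mul_right_cancel₀ hz
        rw [pow_succ, map_mul] at e2
        linear_combination -e2 + (z - c) ^ k * h4
      intro hn
      simp only [norm_div, norm_mul] at hn
      have hn2 : ‖z ^ k - (z - c) ^ k‖ = ‖z ^ k + (z - c) ^ k‖ := by
        have hk' := norm_ne_zero_iff.2 hk
        have : ‖(2 : ℂ)‖ ≠ 0 := by simp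
        field_simp at hn
        exact hn
      have hn3 : (z ^ k - (z - c) ^ k) * conj (z ^ k - (z - c) ^ k)
          = (z ^ k + (z - c) ^ k) * conj (z ^ k + (z - c) ^ k) := by
        rw [Complex.mul_conj', Complex.mul_conj', hn2]
      rw [map_sub, map_add, f1, f2] at hn3
      have : (α - β) * (z ^ k * (z - c) ^ k) = 0 := by
        linear_combination hn3 / 2
      exact mul_ne_zero h0 (mul_ne_zero (pow_ne_zero _ h1) (pow_ne_zero _ h2)) this

/-- The limiting equation at infinity; its zeros considered here solve `z ^ (m + n) = -1`. -/
theorem nondeg_infinity {n m : ℕ} (hm : 1 ≤ m) (hmn : m < n) :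
    ∃ S : Finset ℂ, S.card = m + n ∧ ∀ z ∈ S, ‖z‖ = 1 ∧
      NondegZero (fun z => z ^ n + conj (z ^ m)) z := by
  obtain ⟨S, hS, hS'⟩ := exists_finset_pow_eq (k := m + n) (by omega)
    (neg_ne_zero.2 (one_ne_zero (α := ℂ)))
  refine ⟨S, hS, fun z hz => ?_⟩
  have h := hS' z hz
  have hz1 : ‖z‖ = 1 := by
    have := congrArg norm h
    rw [norm_pow, norm_neg, norm_one] at this
    exact (pow_eq_one_iff_of_nonneg (norm_nonneg z) (by omega)).1 this
  have hzz : z * conj z = 1 := by rw [Complex.mul_conj']; simp [hz1]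
  refine ⟨hz1, ?_, _, _, _, _, fun _ => rfl, hasDerivAt_pow n z, hasDerivAt_pow m z, ?_⟩
  · have h3 : z ^ m * conj z ^ m = 1 := by rw [← mul_pow, hzz, one_pow]
    rw [pow_add] at h
    simp only [map_pow]
    linear_combination conj z ^ m * h - z ^ n * h3
  · simp only [norm_mul, norm_pow, hz1, one_pow, mul_one, Complex.norm_natCast]
    exact_mod_cast hmn.ne'

theorem natDegree_p {n m : ℕ} (hmn : m < n) (c : ℂ) {s : ℂ} (hs : s ≠ 0) :
    (C s * X ^ n + C (1 / 2) * (X ^ m - (X - C c) ^ m)).natDegree = n := by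
  rw [natDegree_add_eq_left_of_natDegree_lt] <;> rw [natDegree_C_mul_X_pow n s hs]
  refine lt_of_le_of_lt (natDegree_C_mul_le _ _) (lt_of_le_of_lt (natDegree_sub_le _ _) ?_)
  simp [natDegree_pow, hmn]

theorem natDegree_q (m : ℕ) (c : ℂ) :
    (C (1 / 2) * (X ^ m + (X - C c) ^ m) : ℂ[X]).natDegree = m := by
  rw [natDegree_C_mul (by norm_num)]
  have h1 : ((X - C c) ^ m : ℂ[X]).Monic := (monic_X_sub_C c).pow m
  have h2 : ((X - C c) ^ m : ℂ[X]).natDegree = m := by simp [natDegree_pow]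
  refine natDegree_eq_of_le_of_coeff_ne_zero ?_ ?_
  · refine (natDegree_add_le _ _).trans ?_
    simp [natDegree_pow]
  · have h3 : ((X - C c) ^ m : ℂ[X]).coeff m = 1 := by
      simpa only [h2] using h1.coeff_natDegree
    rw [coeff_add, h3, coeff_X_pow_self]
    norm_num

/-- Theorem 3: for all `n > m ≥ 1` there is a harmonic polynomial
`h = p + conj ∘ q` with `deg p = n`, `deg q = m`, having at least `m² + m + n` zeros. -/
theorem exists_harmonic_with_m_sq_add_m_add_n_zeros
    (n m : ℕ) (hm : 1 ≤ m) (hmn : m < n) :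
    ∃ p q : Polynomial ℂ, p.natDegree = n ∧ q.natDegree = m ∧
      ∃ S : Finset ℂ, m ^ 2 + m + n ≤ S.card ∧
        ∀ z ∈ S, p.eval z + (starRingEnd ℂ) (q.eval z) = 0 := by
  classical
  obtain ⟨c, hc⟩ := IsAlgClosed.exists_pow_nat_eq Complex.I (n := 2 * m) (by omega)
  have hc1 : ‖c‖ = 1 := by
    have := congrArg norm hc
    rw [norm_pow, Complex.norm_I] at this
    exact (pow_eq_one_iff_of_nonneg (norm_nonneg c) (by omega)).1 this
  obtain ⟨S₀, hS₀, hS₀'⟩ := nondeg_pencils hm hc1 hc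
  obtain ⟨S₁, hS₁, hS₁'⟩ := nondeg_infinity hm hmn
  -- `F₀ (t, ·)` is the perturbed polynomial, `F₁ (t, ·)` its rescaling by `z = w / t`.
  let F₀ : ℝ × ℂ → ℂ := fun x => (x.1 : ℂ) ^ (n - m) * x.2 ^ n +
    ((x.2 ^ m - (x.2 - c) ^ m) / 2 + conj ((x.2 ^ m + (x.2 - c) ^ m) / 2))
  let F₁ : ℝ × ℂ → ℂ := fun x => x.2 ^ n +
    ((x.2 ^ m - (x.2 - x.1 * c) ^ m) / 2 + conj ((x.2 ^ m + (x.2 - x.1 * c) ^ m) / 2))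
  have hof : ContDiff ℝ 1 fun x : ℝ × ℂ => (x.1 : ℂ) :=
    Complex.ofRealCLM.contDiff.comp contDiff_fst
  have hconj : ∀ {f : ℝ × ℂ → ℂ}, ContDiff ℝ 1 f → ContDiff ℝ 1 fun x => conj (f x) :=
    fun hf => Complex.conjCLE.contDiff.comp hf
  have hF₀ : ContDiff ℝ 1 F₀ :=
    ((hof.pow _).mul (contDiff_snd.pow _)).add
      ((((contDiff_snd.pow _).sub ((contDiff_snd.sub contDiff_const).pow _)).div_const _).add
        (hconj (((contDiff_snd.pow _).add
          ((contDiff_snd.sub contDiff_const).pow _)).div_const _)))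
  have hF₁ : ContDiff ℝ 1 F₁ :=
    (contDiff_snd.pow _).add
      ((((contDiff_snd.pow _).sub
        ((contDiff_snd.sub (hof.mul contDiff_const)).pow _)).div_const _).add
        (hconj (((contDiff_snd.pow _).add
          ((contDiff_snd.sub (hof.mul contDiff_const)).pow _)).div_const _)))
  have hnm : n - m ≠ 0 := by omega
  have ev₀ := eventually_exists_finset hF₀ S₀ (by simpa [F₀, hnm] using hS₀') one_pos
  have hF₁0 : (fun x => F₁ (0, x)) = fun x => x ^ n + conj (x ^ m) := by
    funext x
    simp [F₁, Complex.conj_ofNat]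
  have ev₁ := eventually_exists_finset hF₁ S₁
    (by rw [hF₁0]; exact fun z hz => (hS₁' z hz).2) one_half_pos
  obtain ⟨R, hR⟩ := S₀.finite_toSet.isBounded.exists_norm_le
  have hRt : ∀ᶠ t in 𝓝 (0 : ℝ), t * (R + 1) < 1 / 2 := by
    have hcont : Continuous fun t : ℝ => t * (R + 1) := by fun_prop
    exact hcont.continuousAt.eventually_lt continuousAt_const (by norm_num)
  have hev := (ev₀.and (ev₁.and hRt)).filter_mono (nhdsWithin_le_nhds (s := Set.Ioi 0))
  obtain ⟨t, ⟨⟨T₀, hT₀, hT₀'⟩, ⟨T₁, hT₁, hT₁'⟩, ht⟩, htpos⟩ :=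
    (hev.and self_mem_nhdsWithin).exists
  have htpos : 0 < t := htpos
  have htC : (t : ℂ) ≠ 0 := by exact_mod_cast htpos.ne'
  have hscale : ∀ w : ℂ, F₁ (t, w) = (t : ℂ) ^ m * F₀ (t, w / t) := by
    intro w
    have e1 : ∀ x : ℂ, (t : ℂ) ^ m * conj x = conj ((t : ℂ) ^ m * x) := by intro x; simp
    have e2 : w = t * (w / t) := by field_simp
    generalize w / t = v at e2
    subst e2
    have e3 : (t : ℂ) * v - t * c = t * (v - c) := by ring
    have e4 : (t : ℂ) ^ n = t ^ m * t ^ (n - m) := by rw [← pow_add]; congr 1; omega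
    simp only [F₀, F₁, mul_add, e1, e3, mul_pow, e4]
    congr 1
    · ring
    congr 1
    · ring
    · congr 1; ring
  refine ⟨C ((t : ℂ) ^ (n - m)) * X ^ n + C (1 / 2) * (X ^ m - (X - C c) ^ m),
    C (1 / 2) * (X ^ m + (X - C c) ^ m), natDegree_p hmn c (pow_ne_zero _ htC),
    natDegree_q m c, T₀ ∪ T₁.image (fun w => w / (t : ℂ)), ?_, ?_⟩
  · rw [Finset.card_union_of_disjoint, Finset.card_image_of_injective, hT₀, hT₁, hS₀, hS₁]
    · omega
    · intro x y hxy
      exact (div_left_inj' htC).1 hxy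
    · rw [Finset.disjoint_left]
      intro v hv hv'
      obtain ⟨w, hw, rfl⟩ := Finset.mem_image.1 hv'
      obtain ⟨-, z, hz, hd⟩ := hT₀' _ hv
      obtain ⟨-, u, hu, hd'⟩ := hT₁' _ hw
      rw [dist_eq_norm] at hd hd'
      have n1 : ‖w / (t : ℂ)‖ < R + 1 := by
        have := norm_le_norm_add_norm_sub' (w / (t : ℂ)) z
        have := hR z hz
        linarith
      have n2 : 1 / 2 < ‖w‖ := by
        have := norm_le_norm_add_norm_sub' u w
        have := (hS₁' u hu).1
        rw [norm_sub_rev] at hd'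
        linarith
      rw [norm_div, Complex.norm_real, Real.norm_of_nonneg htpos.le, div_lt_iff₀ htpos] at n1
      linarith
  · have heval : ∀ z, F₀ (t, z) = 0 →
        eval z (C ((t : ℂ) ^ (n - m)) * X ^ n + C (1 / 2) * (X ^ m - (X - C c) ^ m)) +
          conj (eval z (C (1 / 2) * (X ^ m + (X - C c) ^ m))) = 0 := by
      intro z hz
      rw [← hz]
      simp [F₀]
      ring
    intro z hz
    apply heval
    rcases Finset.mem_union.1 hz with hz | hz
    · exact (hT₀' z hz).1
    · obtain ⟨w, hw, rfl⟩ := Finset.mem_image.1 hz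
      have := (hT₁' w hw).1
      rw [hscale] at this
      exact (mul_eq_zero.1 this).resolve_left (pow_ne_zero _ htC)
end

section
/- For every fixed integer a ≥ 1, the limit superior as n → ∞ of Z(n, n − a)/n² equals 1. -/
/-!
The sequence is squeezed between `((n - a) / n)²` and `1`.

*Upper bound* (`card_zeros_le`). On a finite set `T` of zeros of `p + conj q` with
`deg q < deg p = n`, the equation and its conjugate express `z ^ n` and `(conj z) ^ n` through
monomials `z ^ i * (conj z) ^ j` of smaller total degree. Hence the `n²` monomials with `i, j < n`
span the space of all functions on `T`, so `#T ≤ n²`. This is Bézout's bound.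

*Lower bound* (`sq_le_Znm`). For `p₀ = z ^ N + (z - 1) ^ N` and `q₀ = z ^ N - (z - 1) ^ N` one has
`p₀ + conj q₀ = 2 Re (z ^ N) + 2 i Im ((z - 1) ^ N)`, which vanishes where one of `N` lines through
`0` meets one of `N` lines through `1`. The `N (N - 1)` of these points off the real axis are
nondegenerate zeros (`deriv_injective`), so they survive the addition of a small term `-ε z ^ n`
(`eventually_exists_zero`). As `deg q₀ = N - 1`, taking `N = n - a + 1` gives
`Z(n, n - a) ≥ N (N - 1) ≥ (n - a)²`.
-/

open Polynomial

/-- `Znm n m` is the maximal possible number of zeros of a harmonic polynomial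
`p + conj ∘ q` with `deg p = n` and `deg q = m`. -/
noncomputable def Znm (n m : ℕ) : ℕ :=
  sSup {k : ℕ | ∃ p q : Polynomial ℂ, p.natDegree = n ∧ q.natDegree = m ∧
    k = {z : ℂ | p.eval z + (starRingEnd ℂ) (q.eval z) = 0}.ncard}

open Filter Topology ComplexConjugate

/-! ### The Bézout bound -/

section Upper

/-- The restriction of `z ^ i * (conj z) ^ j` to the points of `T`. -/
def mono (T : Finset ℂ) (i j : ℕ) : T → ℂ := fun z => (z : ℂ) ^ i * (conj (z : ℂ)) ^ j

theorem mono_mem_span {p q : ℂ[X]} {n : ℕ} (hp : p.natDegree = n) (hq : q.natDegree < n)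
    (T : Finset ℂ) (hT : ∀ z ∈ T, p.eval z + conj (q.eval z) = 0) (d : ℕ) :
    ∀ i j, i + j = d →
      mono T i j ∈ Submodule.span ℂ (Set.range fun x : Fin n × Fin n => mono T x.1 x.2) := by
  have hl : p.coeff n ≠ 0 := by
    rw [← hp]
    apply Polynomial.leadingCoeff_ne_zero.mpr
    rintro rfl
    simp at hp
    omega
  have key : ∀ z ∈ T, z ^ n = (∑ k ∈ Finset.range n, (-p.coeff k / p.coeff n) * z ^ k) +
      ∑ k ∈ Finset.range n, (-conj (q.coeff k) / p.coeff n) * (conj z) ^ k := by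
    intro z hz
    have h := hT z hz
    rw [Polynomial.eval_eq_sum_range, hp, Finset.sum_range_succ,
      Polynomial.eval_eq_sum_range' hq, map_sum] at h
    simp only [map_mul, map_pow] at h
    apply mul_left_cancel₀ hl
    rw [mul_add, Finset.mul_sum, Finset.mul_sum]
    have e1 : ∀ k ∈ Finset.range n, p.coeff n * (-p.coeff k / p.coeff n * z ^ k)
        = -(p.coeff k * z ^ k) := by
      intro k _; field_simp
    have e2 : ∀ k ∈ Finset.range n, p.coeff n * (-conj (q.coeff k) / p.coeff n * (conj z) ^ k)
        = -(conj (q.coeff k) * (conj z) ^ k) := by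
      intro k _; field_simp
    rw [Finset.sum_congr rfl e1, Finset.sum_congr rfl e2, Finset.sum_neg_distrib,
      Finset.sum_neg_distrib]
    linear_combination h
  have key' : ∀ z ∈ T, (conj z) ^ n =
      (∑ k ∈ Finset.range n, conj (-p.coeff k / p.coeff n) * (conj z) ^ k) +
      ∑ k ∈ Finset.range n, conj (-conj (q.coeff k) / p.coeff n) * z ^ k := by
    intro z hz
    have h := congrArg conj (key z hz)
    simpa only [map_add, map_sum, map_mul, map_pow, Complex.conj_conj] using h
  induction d using Nat.strong_induction_on with
  | _ d ih =>
    intro i j hij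
    by_cases hi : n ≤ i
    · have e : mono T i j = (∑ k ∈ Finset.range n, (-p.coeff k / p.coeff n) • mono T (i - n + k) j) +
          ∑ k ∈ Finset.range n, (-conj (q.coeff k) / p.coeff n) • mono T (i - n) (j + k) := by
        funext z
        simp only [Pi.add_apply, Finset.sum_apply, Pi.smul_apply, mono, smul_eq_mul]
        have : (z : ℂ) ^ i = (z : ℂ) ^ (i - n) * (z : ℂ) ^ n := by
          rw [← pow_add]; congr 1; omega
        rw [this, key z z.2, mul_add, add_mul, Finset.mul_sum, Finset.mul_sum, Finset.sum_mul,
          Finset.sum_mul]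
        congr 1 <;> refine Finset.sum_congr rfl fun k _ => ?_ <;> rw [pow_add] <;> ring
      rw [e]
      refine Submodule.add_mem _ (Submodule.sum_mem _ fun k hk => Submodule.smul_mem _ _ ?_)
        (Submodule.sum_mem _ fun k hk => Submodule.smul_mem _ _ ?_) <;>
      · have := Finset.mem_range.mp hk
        exact ih _ (by omega) _ _ rfl
    by_cases hj : n ≤ j
    · have e : mono T i j =
          (∑ k ∈ Finset.range n, conj (-p.coeff k / p.coeff n) • mono T i (j - n + k)) +
          ∑ k ∈ Finset.range n,
            conj (-conj (q.coeff k) / p.coeff n) • mono T (i + k) (j - n) := by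
        funext z
        simp only [Pi.add_apply, Finset.sum_apply, Pi.smul_apply, mono, smul_eq_mul]
        have : (conj (z : ℂ)) ^ j = (conj (z : ℂ)) ^ (j - n) * (conj (z : ℂ)) ^ n := by
          rw [← pow_add]; congr 1; omega
        rw [this, key' z z.2, mul_add, mul_add, Finset.mul_sum, Finset.mul_sum, Finset.mul_sum,
          Finset.mul_sum]
        congr 1 <;> refine Finset.sum_congr rfl fun k _ => ?_ <;> rw [pow_add] <;> ring
      rw [e]
      refine Submodule.add_mem _ (Submodule.sum_mem _ fun k hk => Submodule.smul_mem _ _ ?_)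
        (Submodule.sum_mem _ fun k hk => Submodule.smul_mem _ _ ?_) <;>
      · have := Finset.mem_range.mp hk
        exact ih _ (by omega) _ _ rfl
    · exact Submodule.subset_span ⟨(⟨i, by omega⟩, ⟨j, by omega⟩), rfl⟩

theorem card_zeros_le {p q : ℂ[X]} {n : ℕ} (hp : p.natDegree = n) (hq : q.natDegree < n)
    (T : Finset ℂ) (hT : ∀ z ∈ T, p.eval z + conj (q.eval z) = 0) : T.card ≤ n ^ 2 := by
  classical
  have htop : Submodule.span ℂ (Set.range fun x : Fin n × Fin n => mono T x.1 x.2) = ⊤ := by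
    rw [eq_top_iff]
    intro f _
    -- Lagrange interpolation: powers of `z` alone already span all functions on `T`.
    let r : ℂ → ℂ := fun z => if h : z ∈ T then f ⟨z, h⟩ else 0
    let L := Lagrange.interpolate T id r
    have e : f = ∑ k ∈ Finset.range (L.natDegree + 1), L.coeff k • mono T k 0 := by
      funext z
      have h1 : L.eval (z : ℂ) = r z :=
        Lagrange.eval_interpolate_at_node r (Set.injOn_id _) z.2
      have h2 : r z = f z := by simp [r]
      rw [← h2, ← h1, Polynomial.eval_eq_sum_range]
      simp [mono]
    rw [e]
    exact Submodule.sum_mem _ fun k _ => Submodule.smul_mem _ _ (mono_mem_span hp hq T hT _ k 0 rfl)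
  have h := finrank_range_le_card (R := ℂ) (fun x : Fin n × Fin n => mono T x.1 x.2)
  rw [Set.finrank, htop, finrank_top, Module.finrank_fintype_fun_eq_card] at h
  simpa [sq] using h

theorem zeros_finite {p q : ℂ[X]} {n : ℕ} (hp : p.natDegree = n) (hq : q.natDegree < n) :
    {z : ℂ | p.eval z + conj (q.eval z) = 0}.Finite := by
  by_contra h
  obtain ⟨T, hT, hc⟩ := Set.Infinite.exists_subset_card_eq h (n ^ 2 + 1)
  have := card_zeros_le hp hq T fun z hz => hT hz
  omega

theorem ncard_zeros_le {p q : ℂ[X]} {n : ℕ} (hp : p.natDegree = n) (hq : q.natDegree < n) :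
    {z : ℂ | p.eval z + conj (q.eval z) = 0}.ncard ≤ n ^ 2 := by
  have hf := zeros_finite hp hq
  rw [Set.ncard_eq_toFinset_card _ hf]
  exact card_zeros_le hp hq _ fun z hz => by simpa using hz

theorem Znm_le {n m : ℕ} (h : m < n) : Znm n m ≤ n ^ 2 := by
  apply csSup_le'
  rintro k ⟨p, q, hp, hq, rfl⟩
  exact ncard_zeros_le hp (hq ▸ h)

theorem le_Znm {p q : ℂ[X]} {n m : ℕ} (h : m < n) (hp : p.natDegree = n) (hq : q.natDegree = m)
    (T : Finset ℂ) (hT : ∀ z ∈ T, p.eval z + conj (q.eval z) = 0) : T.card ≤ Znm n m := by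
  have h1 : T.card ≤ {z : ℂ | p.eval z + conj (q.eval z) = 0}.ncard := by
    rw [← Set.ncard_coe_finset]
    exact Set.ncard_le_ncard (fun z hz => hT z hz) (zeros_finite hp (hq ▸ h))
  refine h1.trans (le_csSup ⟨n ^ 2, ?_⟩ ⟨p, q, hp, hq, rfl⟩)
  rintro k ⟨p, q, hp, hq, rfl⟩
  exact ncard_zeros_le hp (hq ▸ h)

end Upper

/-! ### Nondegenerate zeros of the unperturbed polynomial -/

section Lower

/-- The harmonic polynomial `p₀ + conj q₀` with `p₀, q₀ = z ^ N ± (z - 1) ^ N`. -/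
noncomputable def wil (N : ℕ) (z : ℂ) : ℂ :=
  (z ^ N + (z - 1) ^ N) + conj (z ^ N - (z - 1) ^ N)

theorem wil_eq_zero_iff (N : ℕ) (z : ℂ) :
    wil N z = 0 ↔ (z ^ N).re = 0 ∧ ((z - 1) ^ N).im = 0 := by
  rw [wil, Complex.ext_iff]
  simp only [Complex.add_re, Complex.add_im, Complex.conj_re, Complex.conj_im, Complex.sub_re,
    Complex.sub_im, Complex.zero_re, Complex.zero_im]
  constructor <;> rintro ⟨h1, h2⟩ <;> constructor <;> linarith

/-- At a zero of `wil N` off the real axis the real derivative, divided by `N`, is injective. -/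
theorem deriv_injective {N : ℕ} {z v : ℂ} (hz : wil N z = 0) (him : z.im ≠ 0)
    (hv : (z ^ (N - 1) * v).re = 0) (hv' : ((z - 1) ^ (N - 1) * v).im = 0) (hN : N ≠ 0) :
    v = 0 := by
  obtain ⟨h1, h2⟩ := (wil_eq_zero_iff N z).mp hz
  have hz0 : z ≠ 0 := by rintro rfl; simp at him
  have hz1 : z - 1 ≠ 0 := by
    intro h; apply him; simpa using congrArg Complex.im h
  obtain ⟨k, rfl⟩ := Nat.exists_eq_succ_of_ne_zero hN
  simp only [Nat.succ_eq_add_one, Nat.add_sub_cancel] at *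
  -- With `A = z ^ k`, `B = (z - 1) ^ k`: both `A z` and `A v` are imaginary and both
  -- `B (z - 1)` and `B v` are real, so `v` is a real multiple of `z` and of `z - 1`.
  have hA : z ^ k ≠ 0 := pow_ne_zero _ hz0
  have hB : (z - 1) ^ k ≠ 0 := pow_ne_zero _ hz1
  rw [pow_succ] at h1 h2
  have aux : ∀ A u w : ℂ, A ≠ 0 → ((A * u).re = 0 ∧ (A * w).re = 0 ∨
      (A * u).im = 0 ∧ (A * w).im = 0) → (w * conj u).im = 0 := by
    intro A u w hA h
    have hn : Complex.normSq A ≠ 0 := by simpa using hA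
    apply mul_left_cancel₀ hn
    simp only [Complex.mul_re, Complex.mul_im, Complex.conj_re, Complex.conj_im,
      Complex.normSq_apply] at *
    rcases h with ⟨a, b⟩ | ⟨a, b⟩
    · linear_combination (A.re * w.im + A.im * w.re) * a - (A.re * u.im + A.im * u.re) * b
    · linear_combination (A.im * w.im - A.re * w.re) * a - (A.im * u.im - A.re * u.re) * b
  have c1 := aux _ _ _ hA (Or.inl ⟨h1, hv⟩)
  have c2 := aux _ _ _ hB (Or.inr ⟨h2, hv'⟩)
  simp only [Complex.mul_im, Complex.conj_re, Complex.conj_im, map_sub, map_one, Complex.sub_re,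
    Complex.sub_im, Complex.one_re, Complex.one_im] at c1 c2
  have hi : v.im = 0 := by linarith
  have hr : v.re = 0 := by
    rw [hi] at c1
    simpa [him] using c1
  exact Complex.ext hr hi

/-- The real derivative of `wil N`. -/
noncomputable def wilDeriv (N : ℕ) (z : ℂ) : ℂ →L[ℝ] ℂ :=
  ((ContinuousLinearMap.toSpanSingleton ℂ (N * z ^ (N - 1) + N * (z - 1) ^ (N - 1))).restrictScalars ℝ)
    + (Complex.conjCLE : ℂ →L[ℝ] ℂ).comp
      ((ContinuousLinearMap.toSpanSingleton ℂ
        (N * z ^ (N - 1) - N * (z - 1) ^ (N - 1))).restrictScalars ℝ)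

theorem hasStrictFDerivAt_wil (N : ℕ) (z : ℂ) :
    HasStrictFDerivAt (wil N) (wilDeriv N z) z := by
  have h1 : HasStrictDerivAt (fun z : ℂ => z ^ N) (N * z ^ (N - 1)) z := hasStrictDerivAt_pow N z
  have h2 : HasStrictDerivAt (fun z : ℂ => (z - 1) ^ N) (N * (z - 1) ^ (N - 1)) z := by
    simpa using HasStrictDerivAt.fun_pow ((hasStrictDerivAt_id z).sub_const 1) N
  have h3 := (h1.add h2).hasStrictFDerivAt.restrictScalars ℝ
  have h4 := (h1.sub h2).hasStrictFDerivAt.restrictScalars ℝ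
  exact h3.add ((Complex.conjCLE : ℂ →L[ℝ] ℂ).hasStrictFDerivAt.comp z h4)

/-- A zero of `wil N` off the real axis moves continuously when `ε z ^ n` is subtracted: `ε` is
the value of `wil N z / z ^ n`, and this map is open at the zero by the inverse function theorem. -/
theorem eventually_exists_zero {N : ℕ} (n : ℕ) {z : ℂ} (hN : N ≠ 0) (hz : wil N z = 0)
    (him : z.im ≠ 0) {U : Set ℂ} (hU : U ∈ 𝓝 z) :
    ∀ᶠ ε in 𝓝 (0 : ℂ), ∃ w ∈ U, wil N w - ε * w ^ n = 0 := by
  have hz0 : z ≠ 0 := by rintro rfl; simp at him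
  have hne : ∀ᶠ w in 𝓝 z, w ≠ 0 := isOpen_ne.mem_nhds hz0
  obtain ⟨D, hg⟩ : ∃ D : ℂ →L[ℝ] ℂ, HasStrictFDerivAt (fun w : ℂ => (w ^ n)⁻¹) D z :=
    ⟨_, (HasStrictDerivAt.comp z (hasStrictDerivAt_inv (pow_ne_zero n hz0))
      (hasStrictDerivAt_pow n z)).hasStrictFDerivAt.restrictScalars ℝ⟩
  have hH := (hasStrictFDerivAt_wil N z).mul hg
  have hsurj : (wil N z • D + (z ^ n)⁻¹ • wilDeriv N z).range = ⊤ := by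
    rw [LinearMap.range_eq_top]
    apply LinearMap.surjective_of_injective
    rw [injective_iff_map_eq_zero]
    intro v hv
    have h0 : wilDeriv N z v = 0 := by
      simpa [hz, hz0] using hv
    have h1 : (N : ℂ) * ((z ^ (N - 1) * v + (z - 1) ^ (N - 1) * v) +
        conj (z ^ (N - 1) * v - (z - 1) ^ (N - 1) * v)) = 0 := by
      rw [← h0]
      simp [wilDeriv]
      ring
    have h2 := (mul_eq_zero.mp h1).resolve_left (by exact_mod_cast hN)
    rw [Complex.ext_iff] at h2
    simp only [Complex.add_re, Complex.add_im, Complex.conj_re, Complex.conj_im, Complex.sub_re,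
      Complex.sub_im, Complex.zero_re, Complex.zero_im] at h2
    exact deriv_injective hz him (by linarith [h2.1]) (by linarith [h2.2]) hN
  have hmap := hH.map_nhds_eq_of_surj hsurj
  have hUU : U ∩ {w | w ≠ 0} ∈ 𝓝 z := inter_mem hU hne
  have himg := Filter.image_mem_map (m := wil N * fun w => (w ^ n)⁻¹) hUU
  rw [hmap] at himg
  simp only [Pi.mul_apply, hz, zero_mul] at himg
  filter_upwards [himg] with ε hε
  obtain ⟨w, ⟨hwU, hw0⟩, rfl⟩ := hε
  refine ⟨w, hwU, ?_⟩
  have : w ^ n ≠ 0 := pow_ne_zero n hw0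
  simp only
  field_simp
  ring

/-! ### The intersection points of the two pencils of lines -/

/-- The intersection of the line of direction `θ` through `0` with the line of direction `φ`
through `1`. -/
noncomputable def pt (θ φ : ℝ) : ℂ :=
  ((Real.sin φ / Real.sin (φ - θ) : ℝ) : ℂ) * Complex.exp (θ * Complex.I)

theorem pt_sub_one {θ φ : ℝ} (h : Real.sin (φ - θ) ≠ 0) :
    pt θ φ - 1 = ((Real.sin θ / Real.sin (φ - θ) : ℝ) : ℂ) * Complex.exp (φ * Complex.I) := by
  rw [pt]
  apply Complex.ext
  · simp only [Complex.sub_re, Complex.re_ofReal_mul, Complex.exp_ofReal_mul_I_re, Complex.one_re]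
    field_simp
    rw [Real.sin_sub]; ring
  · simp only [Complex.sub_im, Complex.im_ofReal_mul, Complex.exp_ofReal_mul_I_im, Complex.one_im]
    field_simp
    ring

theorem angle_eq_of_mul_exp_eq {r s θ θ' : ℝ} (hs : s ≠ 0) (h0 : θ ∈ Set.Ioo 0 Real.pi)
    (h0' : θ' ∈ Set.Ioo 0 Real.pi)
    (h : (r : ℂ) * Complex.exp (θ * Complex.I) = (s : ℂ) * Complex.exp (θ' * Complex.I)) :
    θ = θ' := by
  rw [Complex.ext_iff] at h
  simp only [Complex.re_ofReal_mul, Complex.exp_ofReal_mul_I_re, Complex.im_ofReal_mul,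
    Complex.exp_ofReal_mul_I_im] at h
  obtain ⟨h1, h2⟩ := h
  have h3 : s * Real.sin (θ - θ') = 0 := by
    rw [Real.sin_sub]
    linear_combination Real.cos θ * h2 - Real.sin θ * h1
  have h4 := (mul_eq_zero.mp h3).resolve_left hs
  have h5 := (Real.sin_eq_zero_iff_of_lt_of_lt (by linarith [h0.1, h0'.2])
    (by linarith [h0.2, h0'.1])).mp h4
  linarith

theorem wil_pt {N : ℕ} {θ φ : ℝ} (h : Real.sin (φ - θ) ≠ 0) (hθ : Real.cos (N * θ) = 0)
    (hφ : Real.sin (N * φ) = 0) : wil N (pt θ φ) = 0 := by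
  rw [wil_eq_zero_iff, pt_sub_one h, pt, mul_pow, mul_pow, ← Complex.exp_nat_mul,
    ← Complex.exp_nat_mul, ← Complex.ofReal_pow, ← Complex.ofReal_pow, ← mul_assoc, ← mul_assoc]
  have e1 : (N : ℂ) * (θ : ℂ) = ((N * θ : ℝ) : ℂ) := by push_cast; rfl
  have e2 : (N : ℂ) * (φ : ℂ) = ((N * φ : ℝ) : ℂ) := by push_cast; rfl
  rw [e1, e2, Complex.re_ofReal_mul, Complex.im_ofReal_mul, Complex.exp_ofReal_mul_I_re,
    Complex.exp_ofReal_mul_I_im, hθ, hφ]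
  simp

theorem exists_zeros (N : ℕ) (hN : N ≠ 0) :
    ∃ S : Finset ℂ, S.card = N * (N - 1) ∧ ∀ z ∈ S, wil N z = 0 ∧ z.im ≠ 0 := by
  classical
  have hNR : (0 : ℝ) < N := by exact_mod_cast Nat.pos_of_ne_zero hN
  have hpi := Real.pi_pos
  let θ : Fin N → ℝ := fun j => (2 * (j : ℕ) + 1) * Real.pi / (2 * N)
  -- The index is shifted so that the real axis, `φ = 0`, is left out.
  let φ : Fin (N - 1) → ℝ := fun k => ((k : ℕ) + 1) * Real.pi / N
  have hθ0 : ∀ j, θ j ∈ Set.Ioo 0 Real.pi := by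
    intro j
    have hj : ((j : ℕ) : ℝ) + 1 ≤ N := by exact_mod_cast j.2
    refine ⟨by positivity, ?_⟩
    simp only [θ]
    rw [div_lt_iff₀ (by positivity)]
    nlinarith
  have hφ0 : ∀ k, φ k ∈ Set.Ioo 0 Real.pi := by
    intro k
    have hk : ((k : ℕ) : ℝ) + 2 ≤ N := by
      have : (k : ℕ) + 2 ≤ N := by have := k.2; omega
      exact_mod_cast this
    refine ⟨by positivity, ?_⟩
    simp only [φ]
    rw [div_lt_iff₀ (by positivity)]
    nlinarith
  have hcos : ∀ j, Real.cos (N * θ j) = 0 := by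
    intro j
    rw [Real.cos_eq_zero_iff]
    refine ⟨(j : ℕ), ?_⟩
    simp only [θ]
    push_cast
    field_simp
  have hsin : ∀ k, Real.sin (N * φ k) = 0 := by
    intro k
    rw [Real.sin_eq_zero_iff]
    refine ⟨(k : ℕ) + 1, ?_⟩
    simp only [φ]
    push_cast
    field_simp
  have hne : ∀ j k, Real.sin (φ k - θ j) ≠ 0 := by
    intro j k h
    have h5 := (Real.sin_eq_zero_iff_of_lt_of_lt (by linarith [(hθ0 j).2, (hφ0 k).1])
      (by linarith [(hθ0 j).1, (hφ0 k).2])).mp h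
    have h6 : φ k = θ j := by linarith
    -- Equal angles would give `cos = sin = 0` at the same argument.
    have h7 := Real.sin_sq_add_cos_sq (N * θ j)
    rw [hcos, ← h6, hsin] at h7
    norm_num at h7
  have hsθ : ∀ j, Real.sin (θ j) ≠ 0 := fun j =>
    (Real.sin_pos_of_pos_of_lt_pi (hθ0 j).1 (hθ0 j).2).ne'
  have hsφ : ∀ k, Real.sin (φ k) ≠ 0 := fun k =>
    (Real.sin_pos_of_pos_of_lt_pi (hφ0 k).1 (hφ0 k).2).ne'
  have hinj : Function.Injective (fun x : Fin N × Fin (N - 1) => pt (θ x.1) (φ x.2)) := by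
    rintro ⟨j, k⟩ ⟨j', k'⟩ h
    simp only at h
    have e1 : θ j = θ j' :=
      angle_eq_of_mul_exp_eq (div_ne_zero (hsφ k') (hne j' k')) (hθ0 j) (hθ0 j') h
    have e2 : φ k = φ k' := by
      have h' := congrArg (fun z => z - 1) h
      simp only [pt_sub_one (hne _ _)] at h'
      exact angle_eq_of_mul_exp_eq (div_ne_zero (hsθ j') (hne j' k')) (hφ0 k) (hφ0 k') h'
    simp only [θ, φ] at e1 e2
    field_simp at e1 e2
    have e3 : ((j : ℕ) : ℝ) = ((j' : ℕ) : ℝ) := by linarith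
    have e4 : ((k : ℕ) : ℝ) = ((k' : ℕ) : ℝ) := by linarith
    rw [Prod.mk.injEq]
    exact ⟨Fin.ext (by exact_mod_cast e3), Fin.ext (by exact_mod_cast e4)⟩
  refine ⟨Finset.univ.image fun x : Fin N × Fin (N - 1) => pt (θ x.1) (φ x.2), ?_, ?_⟩
  · rw [Finset.card_image_of_injective _ hinj]
    simp
  · intro z hz
    obtain ⟨⟨j, k⟩, -, rfl⟩ := Finset.mem_image.mp hz
    refine ⟨wil_pt (hne j k) (hcos j) (hsin k), ?_⟩
    simp only [pt, Complex.im_ofReal_mul, Complex.exp_ofReal_mul_I_im]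
    exact mul_ne_zero (div_ne_zero (hsφ k) (hne j k)) (hsθ j)

/-! ### The perturbed polynomial -/

theorem natDegree_pow_sub (m : ℕ) :
    ((X : ℂ[X]) ^ (m + 1) - (X + C (-1)) ^ (m + 1)).natDegree = m := by
  apply Polynomial.natDegree_eq_of_le_of_coeff_ne_zero
  · rw [Polynomial.natDegree_le_iff_coeff_eq_zero]
    intro k hk
    rw [Polynomial.coeff_sub, Polynomial.coeff_X_pow, Polynomial.coeff_X_add_C_pow]
    rcases Nat.eq_or_lt_of_le (Nat.succ_le_of_lt hk) with h | h
    · subst h; simp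
    · rw [Nat.choose_eq_zero_of_lt h, if_neg (by omega)]; simp
  · rw [Polynomial.coeff_sub, Polynomial.coeff_X_pow, Polynomial.coeff_X_add_C_pow]
    simp
    exact_mod_cast Nat.succ_ne_zero m

theorem natDegree_perturbed {N n : ℕ} (hn : N ≤ n) {ε : ℂ} (hε : ε ≠ 0) (hε2 : ε ≠ 2) :
    ((X : ℂ[X]) ^ N + (X + C (-1)) ^ N - C ε * X ^ n).natDegree = n := by
  apply Polynomial.natDegree_eq_of_le_of_coeff_ne_zero
  · rw [Polynomial.natDegree_le_iff_coeff_eq_zero]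
    intro k hk
    rw [Polynomial.coeff_sub, Polynomial.coeff_add, Polynomial.coeff_X_pow,
      Polynomial.coeff_X_add_C_pow, Polynomial.coeff_C_mul, Polynomial.coeff_X_pow,
      Nat.choose_eq_zero_of_lt (by omega), if_neg (by omega), if_neg (by omega)]
    simp
  · rw [Polynomial.coeff_sub, Polynomial.coeff_add, Polynomial.coeff_X_pow,
      Polynomial.coeff_X_add_C_pow, Polynomial.coeff_C_mul, Polynomial.coeff_X_pow]
    rcases Nat.eq_or_lt_of_le hn with h | h
    · subst h
      simp only [if_true, Nat.sub_self, pow_zero, Nat.choose_self]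
      intro h
      apply hε2
      push_cast at h
      linear_combination -h
    · rw [Nat.choose_eq_zero_of_lt h, if_neg (by omega)]
      simpa using hε

theorem mul_le_Znm {n m : ℕ} (h : m < n) : (m + 1) * m ≤ Znm n m := by
  classical
  obtain ⟨S, hS, hz⟩ := exists_zeros (m + 1) m.succ_ne_zero
  obtain ⟨U, hU, hdisj⟩ := S.finite_toSet.t2_separation
  have hev : ∀ᶠ ε in 𝓝 (0 : ℂ), ∀ z ∈ S, ∃ w ∈ U z, wil (m + 1) w - ε * w ^ n = 0 := by
    rw [Filter.eventually_all_finset]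
    intro z hzS
    exact eventually_exists_zero n m.succ_ne_zero (hz z hzS).1 (hz z hzS).2
      ((hU z).2.mem_nhds (hU z).1)
  have h2 : ∀ᶠ ε in 𝓝 (0 : ℂ), ε ≠ 2 := isOpen_ne.mem_nhds (by norm_num)
  obtain ⟨ε, ⟨hε, hε2⟩, hε0⟩ :=
    (((hev.and h2).filter_mono nhdsWithin_le_nhds).and
      (self_mem_nhdsWithin : ∀ᶠ ε in 𝓝[≠] (0 : ℂ), ε ∈ ({0}ᶜ : Set ℂ))).exists
  choose! w hwU hw using hε
  have hinj : Set.InjOn w S := by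
    intro z hz z' hz' hww
    by_contra hne
    exact Set.disjoint_left.mp (hdisj hz hz' hne) (hwU z hz) (hww ▸ hwU z' hz')
  have hcard : (S.image w).card = (m + 1) * m := by
    rw [Finset.card_image_of_injOn hinj, hS]; rfl
  rw [← hcard]
  refine le_Znm h (natDegree_perturbed (N := m + 1) h hε0 hε2) (natDegree_pow_sub m) _ ?_
  intro y hy
  obtain ⟨z, hzS, rfl⟩ := Finset.mem_image.mp hy
  have := hw z hzS
  rw [wil] at this
  simp only [Polynomial.eval_sub, Polynomial.eval_add, Polynomial.eval_pow, Polynomial.eval_X,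
    Polynomial.eval_C, Polynomial.eval_mul, ← sub_eq_add_neg]
  linear_combination this

theorem sq_le_Znm {n m : ℕ} (h : m < n) : m ^ 2 ≤ Znm n m :=
  le_trans (by nlinarith) (mul_le_Znm h)

end Lower

/-- Corollary: for any fixed integer `a ≥ 1`,
`limsup_{n → ∞} Z(n, n - a) / n² = 1`. -/
theorem limsup_Znm_sub_a_div_sq_eq_one (a : ℕ) (ha : 1 ≤ a) :
    Filter.limsup (fun n : ℕ => (Znm n (n - a) : ℝ) / (n : ℝ) ^ 2)
      Filter.atTop = 1 := by
  apply Filter.Tendsto.limsup_eq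
  have hlow : Tendsto (fun n : ℕ => (1 - (a : ℝ) / n) ^ 2) atTop (𝓝 1) := by
    have := ((tendsto_const_div_atTop_nhds_zero_nat (a : ℝ)).const_sub 1).pow 2
    simpa using this
  refine tendsto_of_tendsto_of_tendsto_of_le_of_le' hlow tendsto_const_nhds ?_ ?_
  · filter_upwards [eventually_ge_atTop a] with n hn
    have hn0 : (0 : ℝ) < n := by exact_mod_cast (by omega : 0 < n)
    have h : ((n - a : ℕ) : ℝ) ^ 2 ≤ Znm n (n - a) := by
      exact_mod_cast sq_le_Znm (by omega : n - a < n)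
    rw [Nat.cast_sub hn] at h
    rw [le_div_iff₀ (by positivity), ← mul_pow, sub_mul, div_mul_cancel₀ _ hn0.ne', one_mul]
    exact h
  · filter_upwards [eventually_ge_atTop a] with n hn
    have h : (Znm n (n - a) : ℝ) ≤ (n : ℝ) ^ 2 := by
      exact_mod_cast Znm_le (by omega : n - a < n)
    exact div_le_one_of_le₀ h (by positivity)
end

section
/- Let p and q be polynomials with real coefficients of degrees n and m with n > m, and let h(z) = p(z) + conj(q(z)). Then there exist bivariate polynomials A and B with real coefficients, each of total degree at most n, such that h(x + iy) = A(x,y) + i·B(x,y) for all real x, y, every monomial appearing in A has even degree in y, and every monomial appearing in B has odd degree in y. Moreover, there exists x₀ ∈ ℝ such that h(x₀) ≠ 0, the derivative of y ↦ h(x₀ + iy) at y = 0 is nonzero, and the (n−1)-st derivative of y ↦ h(x₀ + iy) at y = 0 is nonzero. -/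
/-!
Write `z = x + iy`. Expanding `z ^ k` into real and imaginary parts puts the even powers of `y` in
the real part and the odd ones in the imaginary part (`exists_re_im_pow`). For real coefficients
`conj (q z) = q (conj z)`, so summing over the coefficients gives
`A = ∑ (pₖ + qₖ) Re z ^ k` and `B = ∑ (pₖ - qₖ) Im z ^ k`.

The `k`-th derivative of `y ↦ h (x₀ + iy) = p (x₀ + iy) + q (x₀ - iy)` at `0` is the value at `x₀` of
the polynomial `iᵏ p⁽ᵏ⁾ + (-i)ᵏ q⁽ᵏ⁾` (`iteratedDeriv_eval_add_eval`). For `k ≤ n` it is nonzero,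
because its coefficient of degree `n - k` comes from the leading coefficient of `p` alone. The three
conditions on `x₀` (`k = 0`, `1`, `n - 1`) therefore exclude only finitely many real points.
-/

open Polynomial

namespace HarmonicParts

/-- Bivariate polynomials of total degree at most `k` in which the exponent of the second variable
always has remainder `r` modulo `2`. -/
noncomputable abbrev parityPart (r k : ℕ) : Submodule ℝ (MvPolynomial (Fin 2) ℝ) :=
  MvPolynomial.restrictSupport ℝ {d | d 0 + d 1 ≤ k ∧ d 1 % 2 = r}

lemma mem_parityPart {r k : ℕ} {A : MvPolynomial (Fin 2) ℝ} :
    A ∈ parityPart r k ↔ ∀ d ∈ A.support, d 0 + d 1 ≤ k ∧ d 1 % 2 = r := by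
  rw [parityPart, MvPolynomial.mem_restrictSupport_iff]
  rfl

lemma parityPart_mono {r k l : ℕ} (h : k ≤ l) {A : MvPolynomial (Fin 2) ℝ}
    (hA : A ∈ parityPart r k) : A ∈ parityPart r l := by
  rw [mem_parityPart] at *
  exact fun d hd => ⟨(hA d hd).1.trans h, (hA d hd).2⟩

lemma X_zero_mul_mem {r k : ℕ} {A : MvPolynomial (Fin 2) ℝ} (hA : A ∈ parityPart r k) :
    MvPolynomial.X 0 * A ∈ parityPart r (k + 1) := by
  rw [mem_parityPart] at *
  intro d hd
  rw [MvPolynomial.support_X_mul, Finset.mem_map] at hd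
  obtain ⟨e, he, rfl⟩ := hd
  have := hA e he
  simp
  omega

lemma X_one_mul_mem {r s k : ℕ} (hrs : (r + 1) % 2 = s) {A : MvPolynomial (Fin 2) ℝ}
    (hA : A ∈ parityPart r k) : MvPolynomial.X 1 * A ∈ parityPart s (k + 1) := by
  rw [mem_parityPart] at *
  intro d hd
  rw [MvPolynomial.support_X_mul, Finset.mem_map] at hd
  obtain ⟨e, he, rfl⟩ := hd
  have := hA e he
  simp
  omega

lemma totalDegree_le_of_mem {r k : ℕ} {A : MvPolynomial (Fin 2) ℝ} (hA : A ∈ parityPart r k) :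
    A.totalDegree ≤ k := by
  rw [mem_parityPart] at hA
  rw [MvPolynomial.totalDegree, Finset.sup_le_iff]
  intro d hd
  have := (hA d hd).1
  rw [Finsupp.sum_fintype _ _ (fun _ => rfl)]
  simpa using this

/-- The parity structure of the real and imaginary parts of `(x + iy) ^ k`, by induction from
`z ^ (k + 1) = (x + iy) * z ^ k`. -/
lemma exists_re_im_pow (k : ℕ) : ∃ A B : MvPolynomial (Fin 2) ℝ,
    A ∈ parityPart 0 k ∧ B ∈ parityPart 1 k ∧
    ∀ x y : ℝ, ((x : ℂ) + (y : ℂ) * Complex.I) ^ k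
      = ((MvPolynomial.eval ![x, y] A : ℝ) : ℂ)
        + Complex.I * ((MvPolynomial.eval ![x, y] B : ℝ) : ℂ) := by
  induction k with
  | zero =>
    refine ⟨1, 0, ?_, Submodule.zero_mem _, by simp⟩
    rw [mem_parityPart]
    intro d hd
    have : d = 0 := by
      simpa [MvPolynomial.mem_support_iff, MvPolynomial.coeff_one, eq_comm] using hd
    simp [this]
  | succ k ih =>
    obtain ⟨A, B, hA, hB, h⟩ := ih
    refine ⟨MvPolynomial.X 0 * A - MvPolynomial.X 1 * B, MvPolynomial.X 0 * B + MvPolynomial.X 1 * A,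
      Submodule.sub_mem _ (X_zero_mul_mem hA) (X_one_mul_mem (r := 1) (by norm_num) hB),
      Submodule.add_mem _ (X_zero_mul_mem hB) (X_one_mul_mem (r := 0) (by norm_num) hA),
      fun x y => ?_⟩
    rw [pow_succ, h]
    simp only [map_sub, map_add, map_mul, MvPolynomial.eval_X, Matrix.cons_val_zero,
      Matrix.cons_val_one]
    push_cast
    linear_combination (y : ℂ) * (MvPolynomial.eval ![x, y] B : ℝ) * Complex.I_sq

lemma conj_eval {q : ℂ[X]} (hq : ∀ k, (q.coeff k).im = 0) (z : ℂ) :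
    (starRingEnd ℂ) (q.eval z) = q.eval ((starRingEnd ℂ) z) := by
  simp only [eval_eq_sum_range, map_sum, map_mul, map_pow]
  refine Finset.sum_congr rfl fun k _ => ?_
  rw [Complex.conj_eq_iff_im.2 (hq k)]

lemma iteratedDeriv_eval_add_eval (p q : ℂ[X]) (x : ℝ) (k : ℕ) :
    iteratedDeriv k (fun y : ℝ => p.eval ((x : ℂ) + (y : ℂ) * Complex.I)
        + q.eval ((x : ℂ) - (y : ℂ) * Complex.I))
      = fun y : ℝ => Complex.I ^ k * (derivative^[k] p).eval ((x : ℂ) + (y : ℂ) * Complex.I)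
        + (-Complex.I) ^ k * (derivative^[k] q).eval ((x : ℂ) - (y : ℂ) * Complex.I) := by
  induction k with
  | zero => simp
  | succ k ih =>
    rw [iteratedDeriv_succ, ih]
    funext y
    have hy : HasDerivAt (fun y : ℝ => (y : ℂ) * Complex.I) Complex.I y := by
      simpa using (Complex.ofRealCLM.hasDerivAt (x := y)).mul_const Complex.I
    have h1 := ((derivative^[k] p).hasDerivAt ((x : ℂ) + (y : ℂ) * Complex.I)).comp y
      (hy.const_add (x : ℂ))
    have h2 := ((derivative^[k] q).hasDerivAt ((x : ℂ) - (y : ℂ) * Complex.I)).comp y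
      (hy.const_sub (x : ℂ))
    refine (((h1.const_mul (Complex.I ^ k)).add
      (h2.const_mul ((-Complex.I) ^ k))).congr_deriv ?_).deriv
    simp only [Function.iterate_succ_apply']
    ring

/-- The polynomial in `x₀` whose value is the `k`-th derivative of
`y ↦ p (x₀ + iy) + q (x₀ - iy)` at `0`. -/
noncomputable def derivPoly (p q : ℂ[X]) (k : ℕ) : ℂ[X] :=
  C (Complex.I ^ k) * derivative^[k] p + C ((-Complex.I) ^ k) * derivative^[k] q

lemma derivPoly_ne_zero {p q : ℂ[X]} (h : q.natDegree < p.natDegree) {k : ℕ}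
    (hk : k ≤ p.natDegree) : derivPoly p q k ≠ 0 := by
  intro h0
  have hc := congrArg (fun r : ℂ[X] => r.coeff (p.natDegree - k)) h0
  have hp : p ≠ 0 := by
    rintro rfl
    simp at h
  simp only [derivPoly, coeff_add, coeff_C_mul, coeff_iterate_derivative, Nat.sub_add_cancel hk,
    coeff_eq_zero_of_natDegree_lt h, coeff_zero, nsmul_eq_mul, mul_zero, add_zero,
    mul_eq_zero, pow_eq_zero_iff', Complex.I_ne_zero, Nat.cast_eq_zero,
    Nat.descFactorial_eq_zero_iff_lt, coeff_natDegree, leadingCoeff_eq_zero, hp] at hc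
  simp at hc
  omega

/-- A nonzero complex polynomial does not vanish at all real points. -/
lemma exists_real_eval_ne_zero {r : ℂ[X]} (hr : r ≠ 0) : ∃ x : ℝ, r.eval (x : ℂ) ≠ 0 := by
  by_contra! h
  refine hr (eq_zero_of_infinite_isRoot r
    ((Set.infinite_range_of_injective Complex.ofReal_injective).mono ?_))
  rintro _ ⟨x, rfl⟩
  exact h x

end HarmonicParts

open HarmonicParts

/-- Lemma on the structure of the real and imaginary parts of a harmonic
polynomial with real coefficients, and the existence of a good real point `x₀`. -/
theorem harmonic_real_imag_parts_structure
    (n m : ℕ) (p q : Polynomial ℂ)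
    (hpreal : ∀ k, (p.coeff k).im = 0) (hqreal : ∀ k, (q.coeff k).im = 0)
    (hp : p.natDegree = n) (hq : q.natDegree = m) (hnm : m < n) :
    (∃ A B : MvPolynomial (Fin 2) ℝ,
      A.totalDegree ≤ n ∧ B.totalDegree ≤ n ∧
      (∀ x y : ℝ,
        p.eval ((x : ℂ) + (y : ℂ) * Complex.I)
          + (starRingEnd ℂ) (q.eval ((x : ℂ) + (y : ℂ) * Complex.I))
        = ((MvPolynomial.eval ![x, y] A : ℝ) : ℂ)
          + Complex.I * ((MvPolynomial.eval ![x, y] B : ℝ) : ℂ)) ∧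
      (∀ d ∈ A.support, Even (d 1)) ∧
      (∀ d ∈ B.support, Odd (d 1))) ∧
    ∃ x₀ : ℝ,
      (p.eval (x₀ : ℂ) + (starRingEnd ℂ) (q.eval (x₀ : ℂ)) ≠ 0) ∧
      deriv (fun y : ℝ =>
        p.eval ((x₀ : ℂ) + (y : ℂ) * Complex.I)
          + (starRingEnd ℂ) (q.eval ((x₀ : ℂ) + (y : ℂ) * Complex.I))) 0 ≠ 0 ∧
      iteratedDeriv (n - 1) (fun y : ℝ =>
        p.eval ((x₀ : ℂ) + (y : ℂ) * Complex.I)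
          + (starRingEnd ℂ) (q.eval ((x₀ : ℂ) + (y : ℂ) * Complex.I))) 0 ≠ 0 := by
  subst hp hq
  constructor
  · choose A B hA hB h using exists_re_im_pow
    -- Both polynomials are summed up to the larger degree, that of `p`.
    have hAm : ∑ k ∈ Finset.range (p.natDegree + 1), ((p.coeff k).re + (q.coeff k).re) • A k
        ∈ parityPart 0 p.natDegree :=
      Submodule.sum_mem _ fun k hk => Submodule.smul_mem _ _
        (parityPart_mono (Nat.lt_succ_iff.1 (Finset.mem_range.1 hk)) (hA k))
    have hBm : ∑ k ∈ Finset.range (p.natDegree + 1), ((p.coeff k).re - (q.coeff k).re) • B k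
        ∈ parityPart 1 p.natDegree :=
      Submodule.sum_mem _ fun k hk => Submodule.smul_mem _ _
        (parityPart_mono (Nat.lt_succ_iff.1 (Finset.mem_range.1 hk)) (hB k))
    refine ⟨_, _, totalDegree_le_of_mem hAm, totalDegree_le_of_mem hBm, fun x y => ?_,
      fun d hd => Nat.even_iff.2 (mem_parityPart.1 hAm d hd).2,
      fun d hd => Nat.odd_iff.2 (mem_parityPart.1 hBm d hd).2⟩
    rw [eval_eq_sum_range, eval_eq_sum_range' (hnm.trans (Nat.lt_succ_self _)), map_sum, map_sum,
      map_sum, Complex.ofReal_sum, Complex.ofReal_sum, Finset.mul_sum, ← Finset.sum_add_distrib,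
      ← Finset.sum_add_distrib]
    refine Finset.sum_congr rfl fun k _ => ?_
    have hpk : p.coeff k = ((p.coeff k).re : ℂ) := Complex.ext rfl (by simp [hpreal])
    have hqk : q.coeff k = ((q.coeff k).re : ℂ) := Complex.ext rfl (by simp [hqreal])
    rw [h, hpk, hqk]
    simp only [map_mul, map_add, Complex.conj_ofReal, Complex.conj_I, MvPolynomial.smul_eval,
      Complex.ofReal_re]
    push_cast
    ring
  · have key : ∀ x : ℝ, (fun y : ℝ => p.eval ((x : ℂ) + (y : ℂ) * Complex.I)
          + (starRingEnd ℂ) (q.eval ((x : ℂ) + (y : ℂ) * Complex.I)))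
        = fun y : ℝ => p.eval ((x : ℂ) + (y : ℂ) * Complex.I)
          + q.eval ((x : ℂ) - (y : ℂ) * Complex.I) := by
      intro x
      funext y
      rw [conj_eval hqreal]
      simp [sub_eq_add_neg]
    have hder : ∀ (x : ℝ) (k : ℕ), iteratedDeriv k (fun y : ℝ =>
        p.eval ((x : ℂ) + (y : ℂ) * Complex.I)
          + (starRingEnd ℂ) (q.eval ((x : ℂ) + (y : ℂ) * Complex.I))) 0
        = (derivPoly p q k).eval (x : ℂ) := by
      intro x k
      rw [key, iteratedDeriv_eval_add_eval]
      simp [derivPoly]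
    obtain ⟨x, hx⟩ := exists_real_eval_ne_zero (mul_ne_zero (mul_ne_zero
      (derivPoly_ne_zero hnm (Nat.zero_le _)) (derivPoly_ne_zero hnm (k := 1) (by omega)))
      (derivPoly_ne_zero hnm (Nat.sub_le _ 1)))
    rw [eval_mul, eval_mul, ← hder, ← hder, ← hder, iteratedDeriv_one, iteratedDeriv_zero] at hx
    refine ⟨x, ?_, right_ne_zero_of_mul (left_ne_zero_of_mul hx), right_ne_zero_of_mul hx⟩
    simpa using left_ne_zero_of_mul (left_ne_zero_of_mul hx)
end

section
/- Let p and q be polynomials with real coefficients of degrees n and m respectively, with n > m, and let h(z) = p(z) + conj(q(z)). If the zero set {z ∈ ℂ : h(z) = 0} has exactly n² elements, then at least n of its elements lie on the coordinate axes, i.e., the set {z : h(z) = 0 and (Re(z) = 0 or Im(z) = 0)} has at least n elements. -/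
/-!
The real axis alone already carries `n` zeros. Put `w = conj z`. Since `p` and `q` are real, a zero
`z` of `h` satisfies `p(z) + q(w) = 0` and, after conjugation, `p(w) + q(z) = 0`. Subtracting,
`c(z) = c(w)` for `c = p - q`, so if `z` is not real then the divided difference
`(c(z) - c(w)) / (z - w)`, a polynomial of total degree `n - 1`, vanishes at `(z, w)`.

Hence the nonreal zeros solve two equations of degrees `n` and `n - 1`, and a Bézout-type bound
leaves at most `n (n - 1)` of them, so at least `n² - n (n - 1) = n` zeros are real. The bound is
proved by linear algebra on the space of functions on a finite set `S` of solutions: the first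
equation rewrites `z ^ n` in terms of lower total degree (here `m < n` is used), the second rewrites
`w ^ (n - 1)` in terms of lower total degree or of lower degree in `w`. So every monomial is in
the span of the `n (n - 1)` monomials `z ^ i w ^ j` with `i < n`, `j < n - 1`
(`monomial_mem_span`). By Lagrange interpolation the powers of `z` span all functions on `S`, whence
`|S| ≤ n (n - 1)` (`card_le_of_relations`).
-/

open Polynomial

/-- Reduction of monomials modulo `∑ aₖ xᵏ + ∑ bₖ yᵏ = 0` and the vanishing of the divided
difference of `∑ cₖ Xᵏ` at `x, y`, by induction on the total degree and then on the
exponent of `y`. -/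
lemma monomial_mem_span {A : Type*} [CommRing A] [Algebra ℂ A] (n : ℕ) (x y : A)
    (a b c : ℕ → ℂ) (ha : a n ≠ 0) (hc : c n ≠ 0) (hn : 0 < n)
    (h1 : ∑ k ∈ Finset.range (n + 1), a k • x ^ k + ∑ k ∈ Finset.range n, b k • y ^ k = 0)
    (h2 : ∑ k ∈ Finset.range (n + 1),
      c k • ∑ i ∈ Finset.range k, x ^ i * y ^ (k - 1 - i) = 0) (N : ℕ) :
    ∀ j i : ℕ, i + j = N → x ^ i * y ^ j ∈
      Submodule.span ℂ (Set.range fun t : Fin n × Fin (n - 1) => x ^ (t.1 : ℕ) * y ^ (t.2 : ℕ)) := by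
  set V := Submodule.span ℂ
    (Set.range fun t : Fin n × Fin (n - 1) => x ^ (t.1 : ℕ) * y ^ (t.2 : ℕ)) with hV
  induction N using Nat.strong_induction_on with
  | _ N ihN =>
  intro j
  induction j using Nat.strong_induction_on with
  | _ j ihj =>
  intro i hij
  by_cases hj : n - 1 ≤ j
  · obtain ⟨d, rfl⟩ := Nat.exists_eq_add_of_le hj
    obtain ⟨r, rfl⟩ : ∃ r, n = r + 1 := ⟨n - 1, by omega⟩
    simp only [Nat.add_sub_cancel] at *
    rw [Finset.sum_range_succ,
      Finset.sum_range_succ' (fun l => x ^ l * y ^ (r + 1 - 1 - l)) r, smul_add] at h2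
    have key : c (r + 1) • (x ^ i * y ^ (r + d)) =
        - (∑ k ∈ Finset.range (r + 1), c k • ∑ l ∈ Finset.range k,
            x ^ (i + l) * y ^ (d + (k - 1 - l))
          + c (r + 1) • ∑ l ∈ Finset.range r, x ^ (i + (l + 1)) * y ^ (d + (r - (l + 1)))) := by
      have := congrArg (fun t => x ^ i * y ^ d * t) h2
      simp only [mul_add, mul_smul_comm, Finset.mul_sum, mul_zero] at this
      have e : ∀ u v : ℕ, x ^ i * y ^ d * (x ^ u * y ^ v) = x ^ (i + u) * y ^ (d + v) := by
        intro u v; ring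
      simp only [e, Nat.add_sub_cancel, add_zero, Nat.sub_zero] at this
      rw [add_comm r d, eq_neg_iff_add_eq_zero, ← this]
      abel
    rw [← Submodule.smul_mem_iff V hc, key]
    refine V.neg_mem (V.add_mem (V.sum_mem fun k hk => V.smul_mem _ (V.sum_mem fun l hl => ?_))
      (V.smul_mem _ (V.sum_mem fun l hl => ?_)))
    · rw [Finset.mem_range] at hk hl
      exact ihN (i + l + (d + (k - 1 - l))) (by omega) _ _ rfl
    · rw [Finset.mem_range] at hl
      exact ihj _ (by omega) _ (by omega)
  by_cases hi : n ≤ i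
  · obtain ⟨d, rfl⟩ := Nat.exists_eq_add_of_le hi
    rw [Finset.sum_range_succ] at h1
    have key : a n • (x ^ (n + d) * y ^ j) =
        - (∑ k ∈ Finset.range n, a k • (x ^ (d + k) * y ^ j)
          + ∑ k ∈ Finset.range n, b k • (x ^ d * y ^ (j + k))) := by
      have := congrArg (fun t => x ^ d * y ^ j * t) h1
      simp only [mul_add, mul_smul_comm, Finset.mul_sum, mul_zero] at this
      have e : ∀ u : ℕ, x ^ d * y ^ j * x ^ u = x ^ (d + u) * y ^ j := by
        intro u; ring
      have e' : ∀ u : ℕ, x ^ d * y ^ j * y ^ u = x ^ d * y ^ (j + u) := by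
        intro u; ring
      simp only [e, e'] at this
      rw [add_comm n d, eq_neg_iff_add_eq_zero, ← this]
      abel
    rw [← Submodule.smul_mem_iff V ha, key]
    refine V.neg_mem (V.add_mem (V.sum_mem fun k hk => V.smul_mem _ ?_)
      (V.sum_mem fun k hk => V.smul_mem _ ?_)) <;> rw [Finset.mem_range] at hk
    · exact ihN (d + k + j) (by omega) _ _ rfl
    · exact ihN (d + (j + k)) (by omega) _ _ rfl
  · exact Submodule.subset_span ⟨(⟨i, by omega⟩, ⟨j, by omega⟩), rfl⟩

/-- Bézout-type bound for points `(z, w z)` solving an equation of degree `n` and one of degree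
`n - 1`. -/
lemma card_le_of_relations_s16 (n : ℕ) (S : Finset ℂ) (w : ℂ → ℂ)
    (a b c : ℕ → ℂ) (ha : a n ≠ 0) (hc : c n ≠ 0) (hn : 0 < n)
    (h1 : ∀ z ∈ S, ∑ k ∈ Finset.range (n + 1), a k * z ^ k
      + ∑ k ∈ Finset.range n, b k * w z ^ k = 0)
    (h2 : ∀ z ∈ S, ∑ k ∈ Finset.range (n + 1),
      c k * ∑ i ∈ Finset.range k, z ^ i * w z ^ (k - 1 - i) = 0) :
    S.card ≤ n * (n - 1) := by
  let x : S → ℂ := fun s => s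
  let y : S → ℂ := fun s => w s
  have hmem := monomial_mem_span n x y a b c ha hc hn
    (by ext s; simpa [x, y] using h1 s s.2) (by ext s; simpa [x, y] using h2 s s.2)
  set V := Submodule.span ℂ
    (Set.range fun t : Fin n × Fin (n - 1) => x ^ (t.1 : ℕ) * y ^ (t.2 : ℕ)) with hV
  have htop : V = ⊤ := by
    rw [eq_top_iff]
    intro f _
    -- `f` agrees on `S` with its Lagrange interpolant `P`, a combination of powers of `x`.
    let g : ℂ → ℂ := fun z => if hz : z ∈ S then f ⟨z, hz⟩ else 0
    let P := Lagrange.interpolate S id g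
    have hf : f = ∑ k ∈ Finset.range (P.natDegree + 1), P.coeff k • (x ^ k * y ^ 0) := by
      ext s
      have := Lagrange.eval_interpolate_at_node g (Set.injOn_id (S : Set ℂ)) s.2
      rw [eval_eq_sum_range] at this
      simp [g] at this
      simp [x, P, this, g]
    rw [hf]
    exact V.sum_mem fun k _ => V.smul_mem _ (hmem k 0 k (by simp))
  have hle := finrank_range_le_card (R := ℂ)
    (fun t : Fin n × Fin (n - 1) => x ^ (t.1 : ℕ) * y ^ (t.2 : ℕ))
  rw [Set.finrank, ← hV, htop, finrank_top] at hle
  simpa using hle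

lemma conj_eval_of_real (p : Polynomial ℂ) (hp : ∀ k, (p.coeff k).im = 0) (z : ℂ) :
    (starRingEnd ℂ) (p.eval z) = p.eval ((starRingEnd ℂ) z) := by
  rw [eval_eq_sum_range, eval_eq_sum_range, map_sum]
  refine Finset.sum_congr rfl fun k _ => ?_
  rw [map_mul, map_pow, Complex.conj_eq_iff_im.2 (hp k)]

/-- A harmonic polynomial with real coefficients attaining the maximal number
`n²` of zeros must have at least `n` zeros on the coordinate axes. -/
theorem maximal_zeros_on_axes
    (n m : ℕ) (p q : Polynomial ℂ)
    (hpreal : ∀ k, (p.coeff k).im = 0) (hqreal : ∀ k, (q.coeff k).im = 0)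
    (hp : p.natDegree = n) (hq : q.natDegree = m) (hnm : m < n)
    (hfin : {z : ℂ | p.eval z + (starRingEnd ℂ) (q.eval z) = 0}.Finite)
    (hcard : {z : ℂ | p.eval z + (starRingEnd ℂ) (q.eval z) = 0}.ncard = n ^ 2) :
    n ≤ {z : ℂ | p.eval z + (starRingEnd ℂ) (q.eval z) = 0 ∧
      (z.re = 0 ∨ z.im = 0)}.ncard := by
  set Z := {z : ℂ | p.eval z + (starRingEnd ℂ) (q.eval z) = 0} with hZ
  have hNfin : {z | z ∈ Z ∧ z.im ≠ 0}.Finite := hfin.subset fun z hz => hz.1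
  have hlead : p.coeff n ≠ 0 := by
    rw [← hp]
    have : p ≠ 0 := by rintro rfl; simp at hp; omega
    exact leadingCoeff_ne_zero.2 this
  have hqn : q.coeff n = 0 := coeff_eq_zero_of_natDegree_lt (by omega)
  have hnonreal : {z | z ∈ Z ∧ z.im ≠ 0}.ncard ≤ n * (n - 1) := by
    rw [Set.ncard_eq_toFinset_card _ hNfin]
    refine card_le_of_relations_s16 n hNfin.toFinset (starRingEnd ℂ) p.coeff q.coeff (p - q).coeff
      hlead (by simpa [hqn] using hlead) (by omega) ?_ ?_
    · intro z hz
      rw [Set.Finite.mem_toFinset] at hz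
      have h := hz.1
      rw [hZ, Set.mem_ofPred_eq, conj_eval_of_real q hqreal,
        eval_eq_sum_range' (n := n + 1) (by omega) z,
        eval_eq_sum_range' (n := n) (by omega) ((starRingEnd ℂ) z)] at h
      exact h
    · intro z hz
      rw [Set.Finite.mem_toFinset] at hz
      have h : p.eval z + (starRingEnd ℂ) (q.eval z) = 0 := hz.1
      have h' := congrArg (starRingEnd ℂ) h
      rw [map_add, Complex.conj_conj, map_zero, conj_eval_of_real p hpreal] at h'
      rw [conj_eval_of_real q hqreal] at h
      have hne : z - (starRingEnd ℂ) z ≠ 0 := by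
        intro h0
        exact hz.2 (Complex.conj_eq_iff_im.1 (sub_eq_zero.1 h0).symm)
      apply (mul_eq_zero_iff_right hne).1
      have hdeg : (p - q).natDegree < n + 1 :=
        lt_of_le_of_lt (natDegree_sub_le p q) (by omega)
      have hsub : (p - q).eval z - (p - q).eval ((starRingEnd ℂ) z) = 0 := by
        simp only [eval_sub]
        linear_combination h - h'
      rw [eval_eq_sum_range' hdeg, eval_eq_sum_range' hdeg, ← Finset.sum_sub_distrib] at hsub
      rw [← hsub, Finset.sum_mul]
      refine Finset.sum_congr rfl fun k _ => ?_
      rw [mul_assoc, geom_sum₂_mul, mul_sub]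
  have hAfin : {z : ℂ | p.eval z + (starRingEnd ℂ) (q.eval z) = 0 ∧
      (z.re = 0 ∨ z.im = 0)}.Finite := hfin.subset fun z hz => hz.1
  have hsub : Z ⊆ {z : ℂ | p.eval z + (starRingEnd ℂ) (q.eval z) = 0 ∧
      (z.re = 0 ∨ z.im = 0)} ∪ {z | z ∈ Z ∧ z.im ≠ 0} := by
    intro z hz
    by_cases him : z.im = 0
    · exact Or.inl ⟨hz, Or.inr him⟩
    · exact Or.inr ⟨hz, him⟩
  have h3 := (Set.ncard_le_ncard hsub (hAfin.union hNfin)).trans (Set.ncard_union_le _ _)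
  rw [hcard] at h3
  have h4 : n ^ 2 = n * (n - 1) + n := by
    obtain ⟨r, rfl⟩ : ∃ r, n = r + 1 := ⟨n - 1, by omega⟩
    simp only [Nat.add_sub_cancel]
    ring
  omega
end
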